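/- arXiv:2601.07428 — 2 statements merged into one kernel-verified Lean document; each statement's English description precedes it below -/
import Mathlib

section
/- For the Solecki ideal 𝒮: non(M_𝒮) = non(K_𝒮) = max{𝔟, cov_ω(𝒩)} and cov(M_𝒮) = cov(K_𝒮) = min{𝔡, non(𝒩)}. -/
open Cardinal Filter Set
open scoped ENNReal

noncomputable section

/-- An ideal on a (countable) set `X`, in the sense of the paper: a proper family of
subsets of `X` closed under taking subsets and finite unions and containing all
finite subsets of `X`. -/
structure IsIdealOn {X : Type} (I : Set (Set X)) : Prop where
  subset_mem : ∀ ⦃A B : Set X⦄, A ⊆ B → B ∈ I → A ∈ I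
  union_mem : ∀ ⦃A B : Set X⦄, A ∈ I → B ∈ I → A ∪ B ∈ I
  finite_mem : ∀ ⦃A : Set X⦄, A.Finite → A ∈ I
  proper : (univ : Set X) ∉ I

/-- The finite initial segment `x ↾ n` of `x : X^ω`, as a list (an element of `X^{<ω}`). -/
def seg {X : Type} (x : ℕ → X) (n : ℕ) : List X := (List.range n).map x

/-- The `I`-Miller null ideal `M_I`: the σ-ideal on `X^ω` generated by the sets
`M_φ = {x | ∀^∞ n, x n ∈ φ (x ↾ n)}`, where `φ : X^{<ω} → I`.  (A set is in the
generated σ-ideal iff it is covered by countably many generators.) -/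
def MIdeal {X : Type} (I : Set (Set X)) : Set (Set (ℕ → X)) :=
  {A | ∃ φ : ℕ → List X → Set X, (∀ n s, φ n s ∈ I) ∧
    A ⊆ ⋃ n, {x : ℕ → X | ∀ᶠ m in atTop, x m ∈ φ n (seg x m)}}

/-- The σ-ideal `K_I` on `X^ω` generated by the sets
`K_φ = {x | ∀^∞ n, x n ∈ φ n}`, where `φ : ω → I`. -/
def KIdeal {X : Type} (I : Set (Set X)) : Set (Set (ℕ → X)) :=
  {A | ∃ φ : ℕ → ℕ → Set X, (∀ n m, φ n m ∈ I) ∧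
    A ⊆ ⋃ n, {x : ℕ → X | ∀ᶠ m in atTop, x m ∈ φ n m}}

/-- Additivity `add(J)` of a (σ-)ideal `J`: the least cardinality of a subfamily of `J`
whose union is not in `J`. -/
def addIdeal {Y : Type} (J : Set (Set Y)) : Cardinal :=
  sInf {c | ∃ 𝒜 : Set (Set Y), 𝒜 ⊆ J ∧ ⋃₀ 𝒜 ∉ J ∧ Cardinal.mk 𝒜 = c}

/-- Covering number `cov(J)`: the least cardinality of a subfamily of `J` covering `Y`. -/
def covIdeal {Y : Type} (J : Set (Set Y)) : Cardinal :=
  sInf {c | ∃ 𝒜 : Set (Set Y), 𝒜 ⊆ J ∧ ⋃₀ 𝒜 = Set.univ ∧ Cardinal.mk 𝒜 = c}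

/-- Uniformity `non(J)`: the least cardinality of a subset of `Y` not in `J`. -/
def nonIdeal {Y : Type} (J : Set (Set Y)) : Cardinal :=
  sInf {c | ∃ S : Set Y, S ∉ J ∧ Cardinal.mk S = c}

/-- Cofinality `cof(J)`: the least cardinality of a cofinal (w.r.t. `⊆`) subfamily of `J`. -/
def cofIdeal {Y : Type} (J : Set (Set Y)) : Cardinal :=
  sInf {c | ∃ 𝒜 : Set (Set Y), 𝒜 ⊆ J ∧ (∀ B ∈ J, ∃ A ∈ 𝒜, B ⊆ A) ∧ Cardinal.mk 𝒜 = c}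

/-- `f ≤* g`: eventual domination on `ω^ω`. -/
def LeStar (f g : ℕ → ℕ) : Prop := ∀ᶠ n in atTop, f n ≤ g n

/-- The bounding number `𝔟`. -/
def bNum : Cardinal :=
  sInf {c | ∃ F : Set (ℕ → ℕ), (∀ g : ℕ → ℕ, ∃ f ∈ F, ¬ LeStar f g) ∧ Cardinal.mk F = c}

/-- The dominating number `𝔡`. -/
def dNum : Cardinal :=
  sInf {c | ∃ F : Set (ℕ → ℕ), (∀ f : ℕ → ℕ, ∃ g ∈ F, LeStar f g) ∧ Cardinal.mk F = c}

/-- `A ⊆* B`: almost inclusion (`A \ B` finite). -/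
def AlSub {X : Type} (A B : Set X) : Prop := (A \ B).Finite

/-- The set of cardinalities of witnessing families for `add*_ω(I)`: families `𝒜 ⊆ I`
such that for every countable `B̄ ⊆ I` some `A ∈ 𝒜` satisfies `A ⊄* B` for all `B ∈ B̄`.
`add*_ω(I)` is the minimum of this set (`∞` if it is empty). -/
def addStarOmegaFam {X : Type} (I : Set (Set X)) : Set Cardinal :=
  {c | ∃ 𝒜 : Set (Set X), 𝒜 ⊆ I ∧
    (∀ B : ℕ → Set X, (∀ n, B n ∈ I) → ∃ A ∈ 𝒜, ∀ n, ¬ AlSub A (B n)) ∧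
    Cardinal.mk 𝒜 = c}

/-- The set of cardinalities of witnessing families for `cof*_ω(I)`: families `𝒜` of
countable subsets of `I` such that for every countable `B̄ ⊆ I` there is `Ā ∈ 𝒜` with:
every `B ∈ B̄` satisfies `B ⊆* A` for some `A ∈ Ā`.  `cof*_ω(I)` is the minimum. -/
def cofStarOmegaFam {X : Type} (I : Set (Set X)) : Set Cardinal :=
  {c | ∃ 𝒜 : Set (Set (Set X)), (∀ As ∈ 𝒜, As.Countable ∧ As ⊆ I) ∧
    (∀ B : ℕ → Set X, (∀ n, B n ∈ I) → ∃ As ∈ 𝒜, ∀ n, ∃ A ∈ As, AlSub (B n) A) ∧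
    Cardinal.mk 𝒜 = c}

/-- The set of cardinalities of witnessing families for `non*_ω(I)`: families `𝒜` of
infinite subsets of `X` such that for every countable `B̄ ⊆ I` there is `A ∈ 𝒜` with
`A ∩ B` finite for all `B ∈ B̄`.  `non*_ω(I)` is the minimum of this set. -/
def nonStarOmegaFam {X : Type} (I : Set (Set X)) : Set Cardinal :=
  {c | ∃ 𝒜 : Set (Set X), (∀ A ∈ 𝒜, A.Infinite) ∧
    (∀ B : ℕ → Set X, (∀ n, B n ∈ I) → ∃ A ∈ 𝒜, ∀ n, (A ∩ B n).Finite) ∧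
    Cardinal.mk 𝒜 = c}

/-- The set of cardinalities of witnessing families for `cov*(I)`: families `𝒜 ⊆ I` such
that every infinite `B ⊆ X` has infinite intersection with some member of `𝒜`.
`cov*(I)` is the minimum of this set (`∞` if it is empty, i.e. if `I` is not tall). -/
def covStarFam {X : Type} (I : Set (Set X)) : Set Cardinal :=
  {c | ∃ 𝒜 : Set (Set X), 𝒜 ⊆ I ∧
    (∀ B : Set X, B.Infinite → ∃ A ∈ 𝒜, (A ∩ B).Infinite) ∧ Cardinal.mk 𝒜 = c}

/-- The set of cardinalities of witnessing families for `non*(I)`: families `𝒜` of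
infinite subsets of `X` such that every `B ∈ I` has finite intersection with some
member of `𝒜`.  `non*(I)` is the minimum of this set. -/
def nonStarFam {X : Type} (I : Set (Set X)) : Set Cardinal :=
  {c | ∃ 𝒜 : Set (Set X), (∀ A ∈ 𝒜, A.Infinite) ∧
    (∀ B ∈ I, ∃ A ∈ 𝒜, (A ∩ B).Finite) ∧ Cardinal.mk 𝒜 = c}

/-- The meager ideal of the product space `X^ω`, where `X` carries the discrete
topology (for countable `X` this is a Polish space). -/
def meagerIdeal (X : Type) : Set (Set (ℕ → X)) :=
  letI : TopologicalSpace X := ⊥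
  {A : Set (ℕ → X) | IsMeagre A}

/-- The Fubini product `I ⊗ J` of two ideals. -/
def Fubini {X Y : Type} (I : Set (Set X)) (J : Set (Set Y)) : Set (Set (X × Y)) :=
  {A | {x : X | {y : Y | (x, y) ∈ A} ∉ J} ∈ I}

/-- The ideal `Fin` of finite subsets of `X`. -/
def finIdeal (X : Type) : Set (Set X) := {A : Set X | A.Finite}

/-- The nowhere dense ideal on `2^{<ω}`: `A` belongs to it iff for every `s` there is an
extension `t ⊇ s` none of whose extensions belongs to `A`. -/
def nwdIdeal : Set (Set (List Bool)) :=
  {A | ∀ s : List Bool, ∃ t : List Bool, s <+: t ∧ ∀ u : List Bool, t <+: u → u ∉ A}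

/-- A submeasure: monotone, finitely subadditive, vanishing on `∅`. -/
def IsSubmeasure (φ : Set ℕ → ℝ≥0∞) : Prop :=
  φ ∅ = 0 ∧ (∀ A B : Set ℕ, A ⊆ B → φ A ≤ φ B) ∧ ∀ A B : Set ℕ, φ (A ∪ B) ≤ φ A + φ B

/-- `I` is gradually fragmented: there are a partition `⟨P n⟩` of `ω` into nonempty finite
sets and submeasures `φ n` with `A ∈ I ↔ sup_n φ n (A ∩ P n) < ∞`, together with
`f : ω → ω` such that for all `n, i`, for all but finitely many `j`: any family of at
most `i` subsets of `P j`, each of `φ j`-value `≤ n`, has union of `φ j`-value `≤ f n`. -/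
def GraduallyFragmented (I : Set (Set ℕ)) : Prop :=
  ∃ (P : ℕ → Set ℕ) (φ : ℕ → Set ℕ → ℝ≥0∞) (f : ℕ → ℕ),
    (∀ n, (P n).Finite) ∧ (∀ n, (P n).Nonempty) ∧
    (∀ n m, n ≠ m → Disjoint (P n) (P m)) ∧ (⋃ n, P n) = Set.univ ∧
    (∀ n, IsSubmeasure (φ n)) ∧
    (∀ A : Set ℕ, A ∈ I ↔ (⨆ n, φ n (A ∩ P n)) < ⊤) ∧
    (∀ n i : ℕ, ∀ᶠ j in atTop, ∀ ℬ : Finset (Set ℕ), ℬ.card ≤ i →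
      (∀ B ∈ ℬ, B ⊆ P j) → (∀ B ∈ ℬ, φ j B ≤ (n : ℝ≥0∞)) →
      φ j (⋃ B ∈ ℬ, B) ≤ ((f n : ℕ) : ℝ≥0∞))

/-- The basic clopen cylinder of `2^ω` determined by a finite binary string. -/
def cylSet (s : List Bool) : Set (ℕ → Bool) :=
  {x | ∀ i : Fin s.length, x i.val = s.get i}

/-- `A ⊆ 2^ω` is null for the uniform (coin-flipping) product measure: for every `ε > 0`
it is covered by countably many cylinders of total weight `≤ ε` (the cylinder of a
string `s` has weight `2^{-|s|}`). -/
def IsNullCantor (A : Set (ℕ → Bool)) : Prop :=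
  ∀ ε : ℝ≥0∞, 0 < ε → ∃ s : ℕ → List Bool,
    A ⊆ (⋃ n, cylSet (s n)) ∧ (∑' n : ℕ, (2⁻¹ : ℝ≥0∞) ^ (s n).length) ≤ ε

/-- Coordinatewise addition modulo 2 on `2^ω`. -/
def xorAdd (x y : ℕ → Bool) : ℕ → Bool := fun n => xor (x n) (y n)

/-- The transitive additivity `add_t(𝒩)` of the null ideal of `2^ω`:
`min {|A| : A ⊆ 2^ω ∧ ∃ X ∈ 𝒩, A + X ∉ 𝒩}`. -/
def addTNull : Cardinal :=
  sInf {c | ∃ A : Set (ℕ → Bool),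
    (∃ N : Set (ℕ → Bool), IsNullCantor N ∧ ¬ IsNullCantor (Set.image2 xorAdd A N)) ∧
    Cardinal.mk A = c}

/-- Kada's cardinal invariant `𝔩`: the least `κ` such that for every `g ∈ ω^ω` there is a
family `𝒮`, of size `κ`, of slaloms `S` with `S i ⊆ {0, …, g i}` and `|S i| ≤ i`, such
that every `f ≤* g` satisfies `f ∈* S` for some `S ∈ 𝒮`. -/
def lNum : Cardinal :=
  sInf {c : Cardinal | ∀ g : ℕ → ℕ, ∃ 𝒮 : Set (ℕ → Finset ℕ),
    (∀ S ∈ 𝒮, ∀ i : ℕ, S i ⊆ Finset.range (g i + 1) ∧ (S i).card ≤ i) ∧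
    (∀ f : ℕ → ℕ, LeStar f g → ∃ S ∈ 𝒮, ∀ᶠ i in atTop, f i ∈ S i) ∧
    Cardinal.mk 𝒮 = c}

/-- Membership in `C ⊆ 2^ω` only depends on the first `n` coordinates. -/
def DeterminedBy (C : Set (ℕ → Bool)) (n : ℕ) : Prop :=
  ∀ x y : ℕ → Bool, (∀ i < n, x i = y i) → (x ∈ C ↔ y ∈ C)

/-- Extension of a finite binary string by `false`s. -/
def extendFalse {n : ℕ} (s : Fin n → Bool) : ℕ → Bool :=
  fun i => if h : i < n then s ⟨i, h⟩ else false

/-- `C ⊆ 2^ω` has uniform product measure `1/2`: for some `n`, membership in `C` depends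
only on the first `n` coordinates and exactly half of the `2^n` cylinders of level `n`
are included in `C`. -/
def HalfMeasure (C : Set (ℕ → Bool)) : Prop :=
  ∃ n : ℕ, DeterminedBy C n ∧
    2 * Nat.card {s : Fin n → Bool // extendFalse s ∈ C} = 2 ^ n

/-- Clopenness in the Cantor space `2^ω` (`Bool` discrete, product topology). -/
def IsClopenCantor (C : Set (ℕ → Bool)) : Prop :=
  letI : TopologicalSpace Bool := ⊥
  IsClopen C

/-- Closedness in the Cantor space `2^ω`. -/
def IsClosedCantor (C : Set (ℕ → Bool)) : Prop :=
  letI : TopologicalSpace Bool := ⊥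
  IsClosed C

/-- `Ω`: the (countable) set of clopen subsets of `2^ω` of measure `1/2`. -/
abbrev SoleckiBase : Type := {C : Set (ℕ → Bool) // IsClopenCantor C ∧ HalfMeasure C}

/-- The Solecki ideal `𝒮` on `Ω`: the ideal generated by the sets
`I_y = {C ∈ Ω : y ∈ C}` for `y ∈ 2^ω`. -/
def SoleckiIdeal : Set (Set SoleckiBase) :=
  {A | ∃ F : Finset (ℕ → Bool), A ⊆ ⋃ y ∈ F, {C : SoleckiBase | y ∈ C.val}}

/-- `cov_ω(𝒩)`: the least cardinality of a family of Lebesgue-null sets of reals such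
that every countable set of reals is contained in one of them. -/
def covOmegaNull : Cardinal :=
  sInf {c | ∃ 𝒜 : Set (Set ℝ), (∀ N ∈ 𝒜, MeasureTheory.volume N = 0) ∧
    (∀ B : Set ℝ, B.Countable → ∃ N ∈ 𝒜, B ⊆ N) ∧ Cardinal.mk 𝒜 = c}

/-- `non(𝒩)`: the least cardinality of a non-null set of reals. -/
def nonNullReal : Cardinal :=
  sInf {c | ∃ S : Set ℝ, MeasureTheory.volume S ≠ 0 ∧ Cardinal.mk S = c}

/-- The eventually different ideal `ℰ𝒟` on `ω × ω`. -/
def EDIdeal : Set (Set (ℕ × ℕ)) :=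
  {A | ∃ k : ℕ, ∀ᶠ n in atTop,
    {m : ℕ | (n, m) ∈ A}.Finite ∧ {m : ℕ | (n, m) ∈ A}.ncard ≤ k}

/-- Characteristic function identifying `P(ω)` with `2^ω`. -/
def chiSet (A : Set ℕ) : ℕ → Bool :=
  fun n => @decide (n ∈ A) (Classical.propDecidable _)

/-- `I ⊆ P(ω)` is `F_σ`: under the identification `P(ω) ≅ 2^ω`, `I` is a countable
union of closed subsets of the Cantor space. -/
def IsFSigmaIdeal (I : Set (Set ℕ)) : Prop :=
  ∃ C : ℕ → Set (ℕ → Bool), (∀ n, IsClosedCantor (C n)) ∧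
    ∀ A : Set ℕ, A ∈ I ↔ chiSet A ∈ ⋃ n, C n

/-- The underlying countable set of `Fin^{⊗(n+1)}`: `FinPowType 0 = ω`,
`FinPowType (n+1) = ω × FinPowType n`. -/
def FinPowType : ℕ → Type
  | 0 => ℕ
  | n + 1 => ℕ × FinPowType n

/-- The iterated Fubini power of `Fin`: `FinPowIdeal 0 = Fin`, and
`FinPowIdeal (n+1) = Fin ⊗ FinPowIdeal n`; thus `Fin^{⊗k} = FinPowIdeal (k-1)`. -/
def FinPowIdeal : (n : ℕ) → Set (Set (FinPowType n))
  | 0 => finIdeal ℕ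
  | n + 1 => Fubini (finIdeal ℕ) (FinPowIdeal n)

/-- `π` `k`-constantly bounding-predicts `f`: for all but finitely many `i` there is
`j ∈ [i, i + k)` with `f j ≤ π (f ↾ j)`. -/
def ConstBddPred (k : ℕ) (π : List ℕ → ℕ) (f : ℕ → ℕ) : Prop :=
  ∀ᶠ i in atTop, ∃ j : ℕ, i ≤ j ∧ j < i + k ∧ f j ≤ π (seg f j)

/-- The constant bounding evasion number `𝔢^const_≤(k)`. -/
def eConstLe (k : ℕ) : Cardinal :=
  sInf {c | ∃ F : Set (ℕ → ℕ),
    (∀ π : List ℕ → ℕ, ∃ f ∈ F, ¬ ConstBddPred k π f) ∧ Cardinal.mk F = c}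

/-- The constant bounding prediction number `𝔳^const_≤(k)`. -/
def vConstLe (k : ℕ) : Cardinal :=
  sInf {c | ∃ Ps : Set (List ℕ → ℕ),
    (∀ f : ℕ → ℕ, ∃ π ∈ Ps, ConstBddPred k π f) ∧ Cardinal.mk Ps = c}

/-- The asymptotic density zero ideal `𝒵` on `ω`. -/
def densityZero : Set (Set ℕ) :=
  {A : Set ℕ | Tendsto (fun n : ℕ => ((A ∩ Iio n).ncard : ℝ) / (n : ℝ)) atTop (nhds (0 : ℝ))}

/-- The σ-ideal `ℰ` on `2^ω` generated by the closed null sets. -/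
def EIdeal : Set (Set (ℕ → Bool)) :=
  {A | ∃ C : ℕ → Set (ℕ → Bool),
    (∀ n, IsClosedCantor (C n) ∧ IsNullCantor (C n)) ∧ A ⊆ ⋃ n, C n}


/-! ### Helper lemmas -/

lemma seg_succ {X : Type} (x : ℕ → X) (n : ℕ) : seg x (n + 1) = seg x n ++ [x n] := by
  simp [seg, List.range_succ]

lemma seg_comp {X Y : Type} (D : X → Y) (f : ℕ → X) (n : ℕ) :
    seg (fun n => D (f n)) n = (seg f n).map D := by
  simp [seg]

lemma seg_length {X : Type} (x : ℕ → X) (n : ℕ) : (seg x n).length = n := by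
  simp [seg]

/-- Finitely branching levels of a tree predicted by `π`. -/
def branchLevel (π : List ℕ → ℕ) (c : ℕ) : ℕ → Finset (List ℕ)
  | 0 => {[]}
  | n + 1 => (branchLevel π c n).biUnion fun u =>
      (Finset.range (max c (π u) + 1)).image fun j => u ++ [j]

lemma exists_predict_bound (π : List ℕ → ℕ) :
    ∃ g : ℕ → ℕ, ∀ f : ℕ → ℕ, (∀ᶠ n in atTop, f n ≤ π (seg f n)) → LeStar f g := by
  refine ⟨fun n => (Finset.range (n + 1)).sup fun c =>
    max c ((branchLevel π c n).sup π), fun f hf => ?_⟩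
  obtain ⟨n0, hn0⟩ := eventually_atTop.1 hf
  set c := (Finset.range n0).sup f with hc
  have hle : ∀ n, f n ≤ max c (π (seg f n)) := by
    intro n
    rcases lt_or_ge n n0 with h | h
    · exact le_max_of_le_left (Finset.le_sup (f := f) (Finset.mem_range.2 h))
    · exact le_max_of_le_right (hn0 n h)
  have hmem : ∀ n, seg f n ∈ branchLevel π c n := by
    intro n
    induction n with
    | zero => simp [seg, branchLevel]
    | succ n ih =>
      rw [branchLevel, Finset.mem_biUnion]
      refine ⟨_, ih, ?_⟩
      rw [Finset.mem_image]
      refine ⟨f n, ?_, (seg_succ f n).symm⟩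
      rw [Finset.mem_range]
      exact Nat.lt_succ_of_le (hle n)
  refine eventually_atTop.2 ⟨c, fun n hn => ?_⟩
  refine le_trans ?_ (Finset.le_sup (f := fun c => max c ((branchLevel π c n).sup π))
    (Finset.mem_range.2 (Nat.lt_succ_of_le hn)))
  exact (hle n).trans (max_le_max le_rfl (Finset.le_sup (hmem n)))

lemma isOpen_of_determined {C : Set (ℕ → Bool)} {n : ℕ} (h : DeterminedBy C n) : IsOpen C := by
  have : C = (fun (x : ℕ → Bool) (i : Fin n) => x i) ⁻¹'
      {s : Fin n → Bool | extendFalse s ∈ C} := by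
    ext x
    refine h x _ fun i hi => ?_
    simp [extendFalse, hi]
  rw [this]
  exact (isOpen_discrete _).preimage (by fun_prop)

lemma determined_compl {C : Set (ℕ → Bool)} {n : ℕ} (h : DeterminedBy C n) :
    DeterminedBy Cᶜ n := fun x y hxy => not_congr (h x y hxy)

lemma clopen_of_determined {C : Set (ℕ → Bool)} {n : ℕ} (h : DeterminedBy C n) :
    IsClopenCantor C := by
  show IsClopen C
  exact ⟨⟨isOpen_of_determined (determined_compl h)⟩, isOpen_of_determined h⟩

lemma restrict_extendFalse {n : ℕ} (s : Fin n → Bool) :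
    (fun i : Fin n => extendFalse s i) = s := by
  ext i; simp [extendFalse]

lemma exists_half_disjoint {E : Set (ℕ → Bool)} {n : ℕ}
    (hc : 2 * Nat.card {s : Fin (n + 1) → Bool // extendFalse s ∈ E} ≤ 2 ^ (n + 1))
    (hd : DeterminedBy E (n + 1)) :
    ∃ C : SoleckiBase, Disjoint C.val E := by
  classical
  set A : Finset (Fin (n + 1) → Bool) := Finset.univ.filter fun s => extendFalse s ∈ E with hA
  have hcard : Nat.card {s : Fin (n + 1) → Bool // extendFalse s ∈ E} = A.card := by
    rw [Nat.card_eq_fintype_card, Fintype.card_subtype]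
  have h1 : 2 ^ n ≤ Aᶜ.card := by
    rw [Finset.card_compl]
    simp only [Fintype.card_fun, Fintype.card_bool, Fintype.card_fin]
    rw [pow_succ] at *
    omega
  obtain ⟨T, hTA, hT⟩ := Finset.exists_subset_card_eq h1
  set C : Set (ℕ → Bool) := {x | (fun i : Fin (n + 1) => x i) ∈ T} with hC
  have hdC : DeterminedBy C (n + 1) := by
    intro x y hxy
    have : (fun i : Fin (n + 1) => x i) = fun i : Fin (n + 1) => y i := by
      ext i; exact hxy i i.2
    simp only [hC, mem_ofPred_eq, this]
  refine ⟨⟨C, clopen_of_determined hdC, n + 1, hdC, ?_⟩, ?_⟩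
  · have : Nat.card {s : Fin (n + 1) → Bool // extendFalse s ∈ C} = T.card := by
      rw [Nat.card_eq_fintype_card, Fintype.card_subtype]
      congr 1
      ext s
      simp [hC, restrict_extendFalse]
    rw [this, hT, pow_succ, mul_comm]
  · rw [Set.disjoint_left]
    intro x hx hxE
    have h2 := hTA hx
    rw [Finset.mem_compl] at h2
    apply h2
    rw [hA, Finset.mem_filter]
    refine ⟨Finset.mem_univ _, (hd x _ fun i hi => ?_).1 hxE⟩
    simp [extendFalse, hi]

/-- Integer value of the first `m` bits. -/
def bitVal (y : ℕ → Bool) : ℕ → ℕ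
  | 0 => 0
  | m + 1 => 2 * bitVal y m + (y m).toNat

lemma bitVal_congr {y z : ℕ → Bool} {m : ℕ} (h : ∀ i < m, y i = z i) :
    bitVal y m = bitVal z m := by
  induction m with
  | zero => rfl
  | succ m ih =>
    simp only [bitVal]
    rw [ih fun i hi => h i (hi.trans (Nat.lt_succ_self m)), h m (Nat.lt_succ_self m)]

lemma bitVal_inj {y z : ℕ → Bool} {m : ℕ} (h : bitVal y m = bitVal z m) :
    ∀ i < m, y i = z i := by
  induction m with
  | zero => intro i hi; omega
  | succ m ih =>
    simp only [bitVal] at h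
    have h1 := Bool.toNat_le (y m)
    have h2 := Bool.toNat_le (z m)
    intro i hi
    rcases Nat.lt_succ_iff_lt_or_eq.1 hi with h3 | rfl
    · exact ih (by omega) i h3
    · have h4 : (y i).toNat = (z i).toNat := by omega
      revert h4
      cases y i <;> cases z i <;> simp

/-- left and right end points of dyadic intervals. -/
def lowEnd (y : ℕ → Bool) (m : ℕ) : ℝ := (bitVal y m : ℝ) / 2 ^ m
def highEnd (y : ℕ → Bool) (m : ℕ) : ℝ := ((bitVal y m : ℝ) + 1) / 2 ^ m
/-- The real with given binary expansion. -/
def bitReal (y : ℕ → Bool) : ℝ := ⨆ m, lowEnd y m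

lemma lowEnd_mono (y : ℕ → Bool) : Monotone (lowEnd y) := by
  refine monotone_nat_of_le_succ fun m => ?_
  simp only [lowEnd, bitVal, pow_succ]
  rw [div_le_div_iff₀ (by positivity) (by positivity)]
  push_cast
  have : (0 : ℝ) ≤ ((y m).toNat : ℝ) := by positivity
  nlinarith [pow_pos (two_pos : (0 : ℝ) < 2) m]

lemma highEnd_anti (y : ℕ → Bool) : Antitone (highEnd y) := by
  refine antitone_nat_of_succ_le fun m => ?_
  simp only [highEnd, bitVal, pow_succ]
  rw [div_le_div_iff₀ (by positivity) (by positivity)]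
  push_cast
  have : ((y m).toNat : ℝ) ≤ 1 := by exact_mod_cast Bool.toNat_le (y m)
  nlinarith [pow_pos (two_pos : (0 : ℝ) < 2) m]

lemma bitReal_mem (y : ℕ → Bool) (m : ℕ) : bitReal y ∈ Icc (lowEnd y m) (highEnd y m) := by
  have := (lowEnd_mono y).ciSup_mem_iInter_Icc_of_antitone (highEnd_anti y) (fun m => by
    simp only [lowEnd, highEnd]; gcongr; linarith)
  exact mem_iInter.1 this m

lemma highEnd_sub (y : ℕ → Bool) (m : ℕ) : highEnd y m - lowEnd y m = (1 / 2) ^ m := by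
  simp only [lowEnd, highEnd]; field_simp; simp

lemma null_cover {N : Set ℝ} (hN : MeasureTheory.volume N = 0) :
    ∃ (D : ℕ → SoleckiBase) (E : ℕ → Set (ℕ → Bool)), Monotone E ∧
      (∀ m, Disjoint (D m).val (E m)) ∧ ∀ y, bitReal y ∈ N → ∃ m, y ∈ E m := by
  classical
  obtain ⟨U, hNU, hUo, hU⟩ := Set.exists_isOpen_lt_of_lt (μ := MeasureTheory.volume) N
    (1 / 2 : ℝ≥0∞) (by rw [hN]; simp)
  set E : ℕ → Set (ℕ → Bool) := fun m =>
    {y | Icc (lowEnd y (m + 1)) (highEnd y (m + 1)) ⊆ U} with hE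
  have hdet : ∀ m, DeterminedBy (E m) (m + 1) := by
    intro m x y hxy
    simp only [hE, mem_ofPred_eq, lowEnd, highEnd, bitVal_congr hxy]
  have hcard : ∀ m, 2 * Nat.card {s : Fin (m + 1) → Bool // extendFalse s ∈ E m}
      ≤ 2 ^ (m + 1) := by
    intro m
    set A : Finset (Fin (m + 1) → Bool) := Finset.univ.filter fun s => extendFalse s ∈ E m with hA
    have hcard : Nat.card {s : Fin (m + 1) → Bool // extendFalse s ∈ E m} = A.card := by
      rw [Nat.card_eq_fintype_card, Fintype.card_subtype]
    rw [hcard]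
    have hdisj : (A : Set (Fin (m + 1) → Bool)).PairwiseDisjoint fun s =>
        Ico (lowEnd (extendFalse s) (m + 1)) (highEnd (extendFalse s) (m + 1)) := by
      intro s _ t _ hst
      rw [Function.onFun, Set.disjoint_left]
      intro r hr hr'
      apply hst
      have hb : bitVal (extendFalse s) (m + 1) = bitVal (extendFalse t) (m + 1) := by
        simp only [lowEnd, highEnd, mem_Ico, div_le_iff₀ (pow_pos (two_pos : (0 : ℝ) < 2) (m + 1)),
          lt_div_iff₀ (pow_pos (two_pos : (0 : ℝ) < 2) (m + 1))] at hr hr'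
        have h1 : (bitVal (extendFalse s) (m + 1) : ℝ) < bitVal (extendFalse t) (m + 1) + 1 := by
          linarith
        have h2 : (bitVal (extendFalse t) (m + 1) : ℝ) < bitVal (extendFalse s) (m + 1) + 1 := by
          linarith
        norm_cast at h1 h2
        omega
      have := bitVal_inj hb
      rw [← restrict_extendFalse s, ← restrict_extendFalse t]
      ext i
      exact this i i.2
    have hmeas := MeasureTheory.measure_biUnion_finset (μ := MeasureTheory.volume) hdisj
      (fun _ _ => measurableSet_Ico)
    have hsub : (⋃ s ∈ A, Ico (lowEnd (extendFalse s) (m + 1))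
        (highEnd (extendFalse s) (m + 1))) ⊆ U := by
      refine iUnion₂_subset fun s hs => ?_
      have := (Finset.mem_filter.1 hs).2
      exact Ico_subset_Icc_self.trans this
    have hle := (MeasureTheory.measure_mono (μ := MeasureTheory.volume) hsub).trans hU.le
    rw [hmeas] at hle
    simp only [Real.volume_Ico, highEnd_sub, Finset.sum_const, nsmul_eq_mul] at hle
    have h3 : (A.card : ℝ) * (1 / 2) ^ (m + 1) ≤ 1 / 2 := by
      have h4 : ENNReal.ofReal ((A.card : ℝ) * (1 / 2) ^ (m + 1)) ≤ ENNReal.ofReal (1 / 2) := by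
        rw [ENNReal.ofReal_mul (by positivity), ENNReal.ofReal_natCast]
        refine hle.trans (le_of_eq ?_)
        rw [ENNReal.ofReal_div_of_pos (by norm_num)]; simp
      exact (ENNReal.ofReal_le_ofReal_iff (by norm_num)).1 h4
    have h5 : (2 * A.card : ℝ) ≤ 2 ^ (m + 1) := by
      rw [one_div, inv_pow, ← div_eq_mul_inv, div_le_iff₀ (by positivity)] at h3
      linarith
    exact_mod_cast h5
  choose D hD using fun m => exists_half_disjoint (hcard m) (hdet m)
  refine ⟨D, E, ?_, hD, ?_⟩
  · intro a b hab y hy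
    exact (Icc_subset_Icc (lowEnd_mono y (by omega)) (highEnd_anti y (by omega))).trans hy
  · intro y hy
    obtain ⟨ε, hε, hball⟩ := Metric.isOpen_iff.1 hUo _ (hNU hy)
    obtain ⟨m, hm⟩ := exists_pow_lt_of_lt_one hε (by norm_num : (1 / 2 : ℝ) < 1)
    refine ⟨m, fun r hr => hball ?_⟩
    have h1 := bitReal_mem y (m + 1)
    have h2 := highEnd_sub y (m + 1)
    have h3 : (1 / 2 : ℝ) ^ (m + 1) ≤ (1 / 2) ^ m :=
      pow_le_pow_of_le_one (by norm_num) (by norm_num) (by omega)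
    rw [Metric.mem_ball, Real.dist_eq, abs_lt]
    constructor <;> linarith [hr.1, hr.2, h1.1, h1.2]

/-- Points of `Ω^ω` coded by functions, evading Miller sets with witnesses in a null set. -/
lemma evade {N : Set ℝ} (hN : MeasureTheory.volume N = 0) :
    ∃ Φ : (ℕ → ℕ) → (ℕ → SoleckiBase),
      ∀ F : ℕ → List SoleckiBase → Finset (ℕ → Bool),
        (∀ k s, ∀ y ∈ F k s, bitReal y ∈ N) →
        ∃ g : ℕ → ℕ, ∀ f, ¬ LeStar f g →
          ∀ k, ¬ ∀ᶠ m in atTop, ∃ y ∈ F k (seg (Φ f) m), y ∈ (Φ f m).val := by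
  classical
  obtain ⟨D, E, hmono, hdisj, hcov⟩ := null_cover hN
  refine ⟨fun f n => D (f n), fun F hF => ?_⟩
  have hh : ∀ k s, ∃ m, ∀ y ∈ F k s, y ∈ E m := by
    intro k s
    choose! e he using fun y hy => hcov y (hF k s y hy)
    exact ⟨(F k s).sup e, fun y hy => hmono (Finset.le_sup hy) (he y hy)⟩
  choose h hh using hh
  obtain ⟨g, hg⟩ := exists_predict_bound fun t =>
    (Finset.range (t.length + 1)).sup fun k => h k (t.map D)
  refine ⟨g, fun f hf k hev => hf (hg f ?_)⟩
  filter_upwards [hev, eventually_ge_atTop k] with m ⟨y, hy, hyD⟩ hkm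
  rw [seg_length]
  refine le_trans ?_ (Finset.le_sup (f := fun k => h k ((seg f m).map D))
    (Finset.mem_range.2 (Nat.lt_succ_of_le hkm)))
  by_contra hlt
  push Not at hlt
  rw [seg_comp] at hy
  exact Set.disjoint_left.1 (hdisj (f m)) hyD (hmono hlt.le (hh _ _ y hy))

/-- Uniform measure on `2^ω`. -/
def coinMeasure : MeasureTheory.Measure (ℕ → Bool) :=
  MeasureTheory.Measure.infinitePi fun _ => (PMF.uniformOfFintype Bool).toMeasure

instance : MeasureTheory.IsProbabilityMeasure coinMeasure := by
  unfold coinMeasure; infer_instance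

lemma measurable_of_determined {C : Set (ℕ → Bool)} {n : ℕ} (h : DeterminedBy C n) :
    MeasurableSet C := (isOpen_of_determined h).measurableSet

lemma coin_half {C : Set (ℕ → Bool)} (h : HalfMeasure C) : coinMeasure C = 1 / 2 := by
  classical
  obtain ⟨n, hd, hc⟩ := h
  set A : Finset (Fin n → Bool) := Finset.univ.filter fun s => extendFalse s ∈ C with hA
  have hcard : Nat.card {s : Fin n → Bool // extendFalse s ∈ C} = A.card := by
    rw [Nat.card_eq_fintype_card, Fintype.card_subtype]
  have hCU : C = ⋃ s ∈ A, Set.pi (Finset.range n : Set ℕ) fun i => {extendFalse s i} := by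
    ext x
    simp only [mem_iUnion, Set.mem_pi, Finset.coe_range, mem_Iio, mem_singleton_iff]
    constructor
    · intro hx
      refine ⟨fun i => x i, ?_, fun i hi => by simp [extendFalse, hi]⟩
      rw [hA, Finset.mem_filter]
      refine ⟨Finset.mem_univ _, (hd x _ fun i hi => ?_).1 hx⟩
      simp [extendFalse, hi]
    · rintro ⟨s, hs, hx⟩
      exact (hd x _ hx).2 (Finset.mem_filter.1 hs).2
  rw [hCU, MeasureTheory.measure_biUnion_finset]
  · have : ∀ s ∈ A, coinMeasure (Set.pi (Finset.range n : Set ℕ) fun i => {extendFalse s i})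
        = (2⁻¹ : ℝ≥0∞) ^ n := by
      intro s _
      rw [coinMeasure, MeasureTheory.Measure.infinitePi_pi]
      · simp
      · intro i _; exact MeasurableSet.singleton _
    rw [Finset.sum_congr rfl this, Finset.sum_const, nsmul_eq_mul]
    rw [hcard] at hc
    have h2 : (2 : ℝ≥0∞) * (A.card : ℝ≥0∞) = 2 ^ n := by exact_mod_cast hc
    have h3 : (2 : ℝ≥0∞) * ((A.card : ℝ≥0∞) * 2⁻¹ ^ n) = 1 := by
      rw [← mul_assoc, h2, ← mul_pow, ENNReal.mul_inv_cancel (by simp) (by simp), one_pow]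
    rw [ENNReal.eq_div_iff (by simp) (by simp), h3]
  · intro s _ t _ hst
    rw [Function.onFun, Set.disjoint_left]
    intro x hx hx'
    apply hst
    rw [← restrict_extendFalse s, ← restrict_extendFalse t]
    ext i
    have h1 := hx i (by simp)
    have h2 := hx' i (by simp)
    simp only [mem_singleton_iff] at h1 h2
    rw [← h1, ← h2]
  · intro s _
    exact MeasurableSet.pi (Set.to_countable _) fun i _ => MeasurableSet.singleton _

lemma exists_coding : ∃ q : ℝ → ℕ → (ℕ → Bool), ∀ x : ℕ → SoleckiBase,
    MeasureTheory.volume {r : ℝ | ∃ᶠ n in atTop, ∀ j < n, q r j ∉ (x n).val} = 0 := by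
  classical
  obtain ⟨f, hf, hmap⟩ := MeasureTheory.Measure.exists_measurable_map_eq
    (MeasureTheory.Measure.infinitePi fun _ : ℕ => coinMeasure)
  refine ⟨fun r => f ⟨Int.fract r, Int.fract_nonneg r, (Int.fract_lt_one r).le⟩, fun x => ?_⟩
  set B : ℕ → Set (ℕ → ℕ → Bool) := fun n => Set.pi (Finset.range n : Set ℕ) fun _ => (x n).valᶜ
    with hB
  have hmx : ∀ n, MeasurableSet (x n).val := by
    intro n
    obtain ⟨m, hm, _⟩ := (x n).2.2
    exact measurable_of_determined hm
  have hBm : ∀ n, MeasurableSet (B n) := fun n =>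
    MeasurableSet.pi (Set.to_countable _) fun i _ => (hmx n).compl
  have hmeas : ∀ n, (MeasureTheory.Measure.infinitePi fun _ : ℕ => coinMeasure) (B n)
      = (2⁻¹ : ℝ≥0∞) ^ n := by
    intro n
    rw [hB, MeasureTheory.Measure.infinitePi_pi _ fun i _ => (hmx n).compl]
    simp [MeasureTheory.prob_compl_eq_one_sub (hmx n), coin_half (x n).2.2]
  have hlim : (MeasureTheory.Measure.infinitePi fun _ : ℕ => coinMeasure)
      (limsup B atTop) = 0 := by
    apply MeasureTheory.measure_limsup_atTop_eq_zero
    simp only [hmeas]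
    rw [ENNReal.tsum_geometric]
    simp
  set T : Set unitInterval := f ⁻¹' limsup B atTop with hT
  have hT0 : MeasureTheory.volume T = 0 := by
    rw [hT, ← MeasureTheory.Measure.map_apply hf (MeasurableSet.measurableSet_limsup hBm), hmap,
      hlim]
  have hT1 : MeasureTheory.volume (Subtype.val '' T) = 0 := by
    rwa [MeasureTheory.Measure.Subtype.volume_def,
      comap_subtype_coe_apply measurableSet_Icc] at hT0
  have hsub : {r : ℝ | ∃ᶠ n in atTop, ∀ j < n,
      f ⟨Int.fract r, Int.fract_nonneg r, (Int.fract_lt_one r).le⟩ j ∉ (x n).val} ⊆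
      ⋃ k : ℤ, (fun r => r + -(k : ℝ)) ⁻¹' (Subtype.val '' T) := by
    intro r hr
    rw [mem_iUnion]
    refine ⟨⌊r⌋, ⟨Int.fract r, Int.fract_nonneg r, (Int.fract_lt_one r).le⟩, ?_, ?_⟩
    · rw [hT, mem_preimage, mem_limsup_iff_frequently_mem]
      refine hr.mono fun n hn => ?_
      simpa [hB, Set.mem_pi] using hn
    · simp [Int.fract, sub_eq_add_neg]
  refine MeasureTheory.measure_mono_null hsub (MeasureTheory.measure_iUnion_null fun k => ?_)
  rw [MeasureTheory.measure_preimage_add_right, hT1]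

instance : Countable SoleckiBase := by
  choose d hd using fun C : SoleckiBase => C.2.2
  let e : SoleckiBase → Σ n : ℕ, Set (Fin n → Bool) :=
    fun C => ⟨d C, {s | extendFalse s ∈ C.val}⟩
  have he : Function.Injective e := by
    intro C C' h
    have key : ∀ (n n' : ℕ) (S : Set (ℕ → Bool)) (S' : Set (ℕ → Bool)),
        DeterminedBy S n → DeterminedBy S' n' →
        (⟨n, {s | extendFalse s ∈ S}⟩ : Σ n : ℕ, Set (Fin n → Bool)) =
          ⟨n', {s | extendFalse s ∈ S'}⟩ → S = S' := by
      intro n n' S S' hS hS' hh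
      obtain ⟨rfl, h2⟩ := Sigma.mk.inj_iff.1 hh
      have h3 := eq_of_heq h2
      ext x
      have h4 : ∀ i < n, x i = extendFalse (fun i : Fin n => x i) i := fun i hi => by
        simp [extendFalse, hi]
      rw [hS x _ h4, hS' x _ h4]
      exact Set.ext_iff.1 h3 (fun i : Fin n => x i)
    exact Subtype.ext (key _ _ _ _ (hd C).1 (hd C').1 h)
  exact he.countable

lemma solecki_nonempty (C : SoleckiBase) : ∃ y, y ∈ C.val := by
  obtain ⟨n, _, hc⟩ := C.2.2
  have : Nat.card {s : Fin n → Bool // extendFalse s ∈ C.val} ≠ 0 := by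
    intro h
    rw [h] at hc
    have := pow_pos (two_pos : 0 < 2) n
    omega
  obtain ⟨⟨s, hs⟩⟩ := (Nat.card_ne_zero.1 this).1
  exact ⟨_, hs⟩

lemma finite_mem_solecki {A : Set SoleckiBase} (hA : A.Finite) : A ∈ SoleckiIdeal := by
  classical
  choose y hy using solecki_nonempty
  refine ⟨hA.toFinset.image y, fun C hC => ?_⟩
  simp only [mem_iUnion]
  exact ⟨y C, Finset.mem_image_of_mem _ (hA.mem_toFinset.2 hC), hy C⟩

/-- The code of elements of `Ω`. -/
lemma exists_code : ∃ e : SoleckiBase → ℕ, Function.Injective e := exists_injective_nat _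

lemma K_of_bounded {e : SoleckiBase → ℕ} (he : Function.Injective e) (g : ℕ → ℕ) :
    {x : ℕ → SoleckiBase | LeStar (fun n => e (x n)) g} ∈ KIdeal SoleckiIdeal := by
  refine ⟨fun _ m => {C | e C ≤ g m}, fun _ m => ?_, fun x hx => ?_⟩
  · exact finite_mem_solecki ((Set.finite_Iic (g m)).preimage he.injOn)
  · exact mem_iUnion.2 ⟨0, hx⟩

lemma bNum_le {S : Set (ℕ → SoleckiBase)} (hS : S ∉ KIdeal SoleckiIdeal) :
    bNum ≤ Cardinal.mk S := by
  obtain ⟨e, he⟩ := exists_code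
  refine le_trans (csInf_le' ⟨(fun (x : ℕ → SoleckiBase) n => e (x n)) '' S, fun g => ?_, rfl⟩)
    Cardinal.mk_image_le
  by_contra hcon
  push Not at hcon
  apply hS
  obtain ⟨φ, h1, h2⟩ := K_of_bounded he g
  exact ⟨φ, h1, fun x hx => h2 (hcon _ (mem_image_of_mem _ hx))⟩

lemma covK_le_d_fam {F : Set (ℕ → ℕ)} (hF : ∀ f : ℕ → ℕ, ∃ g ∈ F, LeStar f g) :
    ∃ 𝒜 : Set (Set (ℕ → SoleckiBase)), 𝒜 ⊆ KIdeal SoleckiIdeal ∧ ⋃₀ 𝒜 = Set.univ ∧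
      Cardinal.mk 𝒜 ≤ Cardinal.mk F := by
  obtain ⟨e, he⟩ := exists_code
  refine ⟨(fun g => {x : ℕ → SoleckiBase | LeStar (fun n => e (x n)) g}) '' F, ?_, ?_,
    Cardinal.mk_image_le⟩
  · rintro _ ⟨g, _, rfl⟩
    exact K_of_bounded he g
  · refine eq_univ_of_forall fun x => ?_
    obtain ⟨g, hg, hx⟩ := hF fun n => e (x n)
    exact ⟨_, ⟨g, hg, rfl⟩, hx⟩

lemma covK_le_non_fam {S : Set ℝ} (hS : MeasureTheory.volume S ≠ 0) :
    ∃ 𝒜 : Set (Set (ℕ → SoleckiBase)), 𝒜 ⊆ KIdeal SoleckiIdeal ∧ ⋃₀ 𝒜 = Set.univ ∧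
      Cardinal.mk 𝒜 ≤ Cardinal.mk S := by
  classical
  obtain ⟨q, hq⟩ := exists_coding
  refine ⟨(fun r => {x : ℕ → SoleckiBase | ∀ᶠ n in atTop, ∃ j < n, q r j ∈ (x n).val}) '' S, ?_, ?_,
    Cardinal.mk_image_le⟩
  · rintro _ ⟨r, _, rfl⟩
    refine ⟨fun _ n => {C | ∃ j < n, q r j ∈ C.val}, fun _ n => ?_, fun x hx =>
      mem_iUnion.2 ⟨0, hx⟩⟩
    refine ⟨(Finset.range n).image (q r), fun C hC => ?_⟩
    obtain ⟨j, hj, hC⟩ := hC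
    simp only [mem_iUnion]
    exact ⟨q r j, Finset.mem_image_of_mem _ (Finset.mem_range.2 hj), hC⟩
  · refine eq_univ_of_forall fun x => ?_
    by_contra hcon
    apply hS
    refine MeasureTheory.measure_mono_null (fun r hr => ?_) (hq x)
    by_contra hr'
    apply hcon
    refine ⟨_, ⟨r, hr, rfl⟩, ?_⟩
    have := Filter.not_frequently.1 hr'
    refine this.mono fun n hn => ?_
    push Not at hn
    exact hn

lemma covOmega_le {S : Set (ℕ → SoleckiBase)} (hS : S ∉ KIdeal SoleckiIdeal) :
    covOmegaNull ≤ Cardinal.mk S := by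
  classical
  obtain ⟨q, hq⟩ := exists_coding
  refine le_trans (csInf_le' ⟨(fun x : ℕ → SoleckiBase =>
    {r : ℝ | ∃ᶠ n in atTop, ∀ j < n, q r j ∉ (x n).val}) '' S, ?_, ?_, rfl⟩)
    Cardinal.mk_image_le
  · rintro _ ⟨x, _, rfl⟩
    exact hq x
  · intro B hB
    obtain ⟨b, hb⟩ : ∃ b : ℕ → ℝ, B ⊆ range b := by
      rcases B.eq_empty_or_nonempty with rfl | hne
      · exact ⟨fun _ => 0, empty_subset _⟩
      · obtain ⟨b, rfl⟩ := hB.exists_eq_range hne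
        exact ⟨b, subset_rfl⟩
    by_contra hcon
    apply hS
    refine ⟨fun _ n => {C | ∃ i ≤ n, ∃ j < n, q (b i) j ∈ C.val}, fun _ n => ?_, fun x hx =>
      mem_iUnion.2 ⟨0, ?_⟩⟩
    · refine ⟨(Finset.range (n + 1)).biUnion fun i => (Finset.range n).image (q (b i)),
        fun C hC => ?_⟩
      obtain ⟨i, hi, j, hj, hC⟩ := hC
      simp only [mem_iUnion]
      exact ⟨q (b i) j, Finset.mem_biUnion.2 ⟨i, Finset.mem_range.2 (by omega),
        Finset.mem_image_of_mem _ (Finset.mem_range.2 hj)⟩, hC⟩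
    · by_contra hfr
      apply hcon
      refine ⟨_, ⟨x, hx, rfl⟩, fun r hr => ?_⟩
      obtain ⟨i, rfl⟩ := hb hr
      have h1 := (Filter.not_eventually.1 hfr).and_eventually (eventually_ge_atTop i)
      refine h1.mono fun n hn j hj hmem => hn.1 ⟨i, hn.2, j, hj, hmem⟩

lemma K_sub_M {A : Set (ℕ → SoleckiBase)} (h : A ∈ KIdeal SoleckiIdeal) :
    A ∈ MIdeal SoleckiIdeal := by
  obtain ⟨φ, h1, h2⟩ := h
  refine ⟨fun n s => φ n s.length, fun n s => h1 _ _, fun x hx => ?_⟩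
  obtain ⟨n, hn⟩ := mem_iUnion.1 (h2 hx)
  refine mem_iUnion.2 ⟨n, ?_⟩
  simpa [seg_length] using hn

/-- Finite-set witnesses for membership in `M_𝒮`. -/
lemma M_witness {A : Set (ℕ → SoleckiBase)} (h : A ∈ MIdeal SoleckiIdeal) :
    ∃ F : ℕ → List SoleckiBase → Finset (ℕ → Bool), ∀ x ∈ A, ∃ k,
      ∀ᶠ m in atTop, ∃ y ∈ F k (seg x m), y ∈ (x m).val := by
  obtain ⟨φ, h1, h2⟩ := h
  choose F hF using h1
  refine ⟨F, fun x hx => ?_⟩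
  obtain ⟨n, hn⟩ := mem_iUnion.1 (h2 hx)
  refine ⟨n, hn.mono fun m hm => ?_⟩
  simpa using hF _ _ hm

lemma b_set_nonempty : {c | ∃ F : Set (ℕ → ℕ), (∀ g : ℕ → ℕ, ∃ f ∈ F, ¬ LeStar f g) ∧
    Cardinal.mk F = c}.Nonempty := by
  refine ⟨_, univ, fun g => ⟨fun n => g n + 1, mem_univ _, fun h => ?_⟩, rfl⟩
  obtain ⟨n, hn⟩ := h.exists
  exact absurd hn (by simp)

lemma d_set_nonempty : {c | ∃ F : Set (ℕ → ℕ), (∀ f : ℕ → ℕ, ∃ g ∈ F, LeStar f g) ∧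
    Cardinal.mk F = c}.Nonempty :=
  ⟨_, univ, fun g => ⟨g, mem_univ _, Eventually.of_forall fun _ => le_rfl⟩, rfl⟩

lemma covOmega_set_nonempty : {c | ∃ 𝒜 : Set (Set ℝ), (∀ N ∈ 𝒜, MeasureTheory.volume N = 0) ∧
    (∀ B : Set ℝ, B.Countable → ∃ N ∈ 𝒜, B ⊆ N) ∧ Cardinal.mk 𝒜 = c}.Nonempty :=
  ⟨_, {N | MeasureTheory.volume N = 0}, fun _ h => h,
    fun B hB => ⟨B, hB.measure_zero _, subset_rfl⟩, rfl⟩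

lemma nonNull_set_nonempty :
    {c | ∃ S : Set ℝ, MeasureTheory.volume S ≠ 0 ∧ Cardinal.mk S = c}.Nonempty :=
  ⟨_, univ, by simp, rfl⟩

lemma aleph0_le_b : ℵ₀ ≤ bNum := by
  obtain ⟨F, hF, hc⟩ := csInf_mem b_set_nonempty
  rw [bNum, ← hc]
  by_contra hlt
  push Not at hlt
  have hfin : F.Finite := Cardinal.lt_aleph0_iff_set_finite.1 hlt
  obtain ⟨f, hf, hnot⟩ := hF fun n => hfin.toFinset.sup fun f => f n
  exact hnot (Eventually.of_forall fun n =>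
    Finset.le_sup (f := fun f : ℕ → ℕ => f n) (hfin.mem_toFinset.2 hf))

lemma aleph0_lt_nonNull : ℵ₀ < nonNullReal := by
  obtain ⟨S, hS, hc⟩ := csInf_mem nonNull_set_nonempty
  rw [nonNullReal, ← hc]
  by_contra hlt
  push Not at hlt
  exact hS ((Cardinal.le_aleph0_iff_set_countable.1 hlt).measure_zero _)

lemma exists_not_M : ∃ S : Set (ℕ → SoleckiBase), S ∉ MIdeal SoleckiIdeal ∧
    Cardinal.mk S ≤ max bNum covOmegaNull := by
  obtain ⟨B, hB, hBc⟩ := csInf_mem b_set_nonempty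
  obtain ⟨𝒜, h𝒜, hcov, h𝒜c⟩ := csInf_mem covOmega_set_nonempty
  choose Φ hΦ using fun N : 𝒜 => evade (h𝒜 N.1 N.2)
  refine ⟨range fun p : 𝒜 × B => Φ p.1 p.2.1, fun hM => ?_, ?_⟩
  · obtain ⟨F, hF⟩ := M_witness hM
    obtain ⟨N, hN, hsub⟩ := hcov (⋃ k, ⋃ s, bitReal '' (F k s : Set (ℕ → Bool)))
      (countable_iUnion fun k => countable_iUnion fun s =>
        ((F k s).finite_toSet.image _).countable)
    obtain ⟨g, hg⟩ := hΦ ⟨N, hN⟩ F fun k s y hy =>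
      hsub (mem_iUnion₂.2 ⟨k, s, mem_image_of_mem _ hy⟩)
    obtain ⟨f, hf, hfg⟩ := hB g
    obtain ⟨k, hk⟩ := hF _ ⟨(⟨N, hN⟩, ⟨f, hf⟩), rfl⟩
    exact hg f hfg k hk
  · refine Cardinal.mk_range_le.trans ?_
    rw [Cardinal.mk_prod, Cardinal.lift_id, Cardinal.lift_id]
    have h1 : Cardinal.mk 𝒜 = covOmegaNull := h𝒜c
    have h2 : Cardinal.mk B = bNum := hBc
    rw [h1, h2]
    refine (Cardinal.mul_le_max _ _).trans ?_
    have := aleph0_le_b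
    refine max_le (max_le (le_max_right _ _) (le_max_left _ _)) (this.trans (le_max_left _ _))

lemma min_le_covM {𝒜 : Set (Set (ℕ → SoleckiBase))} (h𝒜 : 𝒜 ⊆ MIdeal SoleckiIdeal)
    (hcov : ⋃₀ 𝒜 = Set.univ) : min dNum nonNullReal ≤ Cardinal.mk 𝒜 := by
  by_contra hlt
  push Not at hlt
  obtain ⟨hd, hn⟩ := lt_min_iff.1 hlt
  choose F hF using fun A : 𝒜 => M_witness (h𝒜 A.2)
  let Y : Set ℝ := ⋃ p : 𝒜 × ℕ × List SoleckiBase,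
    bitReal '' (F p.1 p.2.1 p.2.2 : Set (ℕ → Bool))
  have hY : MeasureTheory.volume Y = 0 := by
    by_contra hne
    have h1 : nonNullReal ≤ Cardinal.mk Y := csInf_le' ⟨Y, hne, rfl⟩
    have h2 : Cardinal.mk Y ≤ max (Cardinal.mk 𝒜) ℵ₀ := by
      refine (Cardinal.mk_iUnion_le _).trans ?_
      have h3 : Cardinal.mk (𝒜 × ℕ × List SoleckiBase) ≤ max (Cardinal.mk 𝒜) ℵ₀ := by
        rw [Cardinal.mk_prod, Cardinal.lift_id, Cardinal.lift_id]
        refine (Cardinal.mul_le_max _ _).trans ?_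
        have : Cardinal.mk (ℕ × List SoleckiBase) ≤ ℵ₀ := Cardinal.mk_le_aleph0
        exact max_le (max_le (le_max_left _ _) (this.trans (le_max_right _ _))) (le_max_right _ _)
      have h4 : (⨆ p : 𝒜 × ℕ × List SoleckiBase, Cardinal.mk
          (bitReal '' (F p.1 p.2.1 p.2.2 : Set (ℕ → Bool)) : Set ℝ)) ≤ ℵ₀ := by
        refine ciSup_le' fun p => ?_
        exact Cardinal.le_aleph0_iff_set_countable.2
          ((F p.1 p.2.1 p.2.2).finite_toSet.image _).countable
      refine (mul_le_mul' h3 h4).trans ?_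
      refine (Cardinal.mul_le_max _ _).trans ?_
      exact max_le (max_le le_rfl (le_max_right _ _)) (le_max_right _ _)
    exact absurd (h1.trans h2) (not_le.2 (max_lt hn aleph0_lt_nonNull))
  obtain ⟨Φ, hΦ⟩ := evade hY
  choose g hg using fun A : 𝒜 => hΦ (F A) fun k s y hy =>
    mem_iUnion.2 ⟨(A, k, s), mem_image_of_mem _ hy⟩
  obtain ⟨f, hf⟩ : ∃ f, ∀ A, ¬ LeStar f (g A) := by
    by_contra hcon
    push Not at hcon
    have h1 : dNum ≤ Cardinal.mk (range g) := csInf_le' ⟨range g, fun f => by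
      obtain ⟨A, hA⟩ := hcon f
      exact ⟨_, mem_range_self A, hA⟩, rfl⟩
    exact absurd (h1.trans Cardinal.mk_range_le) (not_le.2 hd)
  obtain ⟨A, hA, hx⟩ : Φ f ∈ ⋃₀ 𝒜 := hcov ▸ mem_univ _
  obtain ⟨k, hk⟩ := hF ⟨A, hA⟩ _ hx
  exact hg ⟨A, hA⟩ f (hf _) k hk

/-- For the Solecki ideal `𝒮`:
`non(M_𝒮) = non(K_𝒮) = max {𝔟, cov_ω(𝒩)}` and `cov(M_𝒮) = cov(K_𝒮) = min {𝔡, non(𝒩)}`. -/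
theorem stmt17 :
    nonIdeal (MIdeal SoleckiIdeal) = nonIdeal (KIdeal SoleckiIdeal) ∧
    nonIdeal (MIdeal SoleckiIdeal) = max bNum covOmegaNull ∧
    covIdeal (MIdeal SoleckiIdeal) = covIdeal (KIdeal SoleckiIdeal) ∧
    covIdeal (MIdeal SoleckiIdeal) = min dNum nonNullReal := by
  have hneM : {c | ∃ S : Set (ℕ → SoleckiBase), S ∉ MIdeal SoleckiIdeal ∧
      Cardinal.mk S = c}.Nonempty := by
    obtain ⟨S, hS, _⟩ := exists_not_M
    exact ⟨_, S, hS, rfl⟩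
  have hneK : {c | ∃ S : Set (ℕ → SoleckiBase), S ∉ KIdeal SoleckiIdeal ∧
      Cardinal.mk S = c}.Nonempty := by
    obtain ⟨S, hS, _⟩ := exists_not_M
    exact ⟨_, S, fun h => hS (K_sub_M h), rfl⟩
  have h1 : nonIdeal (MIdeal SoleckiIdeal) ≤ max bNum covOmegaNull := by
    obtain ⟨S, hS, hc⟩ := exists_not_M
    exact le_trans (csInf_le' ⟨S, hS, rfl⟩) hc
  have h2 : nonIdeal (KIdeal SoleckiIdeal) ≤ nonIdeal (MIdeal SoleckiIdeal) := by
    obtain ⟨S, hS, hc⟩ := csInf_mem hneM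
    exact csInf_le' ⟨S, fun h => hS (K_sub_M h), hc⟩
  have h3 : max bNum covOmegaNull ≤ nonIdeal (KIdeal SoleckiIdeal) := by
    refine le_csInf hneK ?_
    rintro _ ⟨S, hS, rfl⟩
    exact max_le (bNum_le hS) (covOmega_le hS)
  have h4 : covIdeal (KIdeal SoleckiIdeal) ≤ min dNum nonNullReal := by
    refine le_min (le_csInf d_set_nonempty ?_) (le_csInf nonNull_set_nonempty ?_)
    · rintro _ ⟨F, hF, rfl⟩
      obtain ⟨𝒜, ha, hb, hc⟩ := covK_le_d_fam hF
      exact le_trans (csInf_le' ⟨𝒜, ha, hb, rfl⟩) hc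
    · rintro _ ⟨S, hS, rfl⟩
      obtain ⟨𝒜, ha, hb, hc⟩ := covK_le_non_fam hS
      exact le_trans (csInf_le' ⟨𝒜, ha, hb, rfl⟩) hc
  have hcK : {c | ∃ 𝒜 : Set (Set (ℕ → SoleckiBase)), 𝒜 ⊆ KIdeal SoleckiIdeal ∧
      ⋃₀ 𝒜 = Set.univ ∧ Cardinal.mk 𝒜 = c}.Nonempty := by
    obtain ⟨_, F, hF, _⟩ := d_set_nonempty
    obtain ⟨𝒜, ha, hb, hc⟩ := covK_le_d_fam hF
    exact ⟨_, 𝒜, ha, hb, rfl⟩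
  have h5 : covIdeal (MIdeal SoleckiIdeal) ≤ covIdeal (KIdeal SoleckiIdeal) := by
    obtain ⟨𝒜, ha, hb, hc⟩ := csInf_mem hcK
    exact csInf_le' ⟨𝒜, fun A hA => K_sub_M (ha hA), hb, hc⟩
  have h6 : min dNum nonNullReal ≤ covIdeal (MIdeal SoleckiIdeal) := by
    refine le_csInf ?_ ?_
    · obtain ⟨_, 𝒜, ha, hb, _⟩ := hcK
      exact ⟨_, 𝒜, fun A hA => K_sub_M (ha hA), hb, rfl⟩
    · rintro _ ⟨𝒜, ha, hb, rfl⟩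
      exact min_le_covM ha hb
  exact ⟨le_antisymm (h1.trans h3) h2, le_antisymm h1 (h3.trans h2),
    le_antisymm h5 (h4.trans h6), le_antisymm (h5.trans h4) h6⟩

end
end

section
/- For the asymptotic density zero ideal 𝒵: non(ℰ) ≤ non*(𝒵), cov*(𝒵) ≤ cov(ℰ), and cov*(𝒵) ≤ non*(𝒵). -/
open Cardinal Filter Set
open scoped ENNReal

noncomputable section

/-! ### Helper lemmas: counting and density -/

/-- The dyadic level `[2^n, 2^(n+1))`. -/
def lvl (n : ℕ) : Finset ℕ := Finset.Ico (2 ^ n) (2 ^ (n + 1))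

theorem mem_lvl_log {N : ℕ} (hN : N ≠ 0) : N ∈ lvl (Nat.log 2 N) := by
  simp only [lvl, Finset.mem_Ico]
  exact ⟨Nat.pow_log_le_self 2 hN, Nat.lt_pow_succ_log_self (by norm_num) N⟩

theorem log_of_mem_lvl {N n : ℕ} (h : N ∈ lvl n) : Nat.log 2 N = n := by
  simp only [lvl, Finset.mem_Ico] at h
  exact Nat.log_eq_of_pow_le_of_lt_pow h.1 h.2

open Classical in
theorem count_lemma (n p k : ℕ) (hpn : p ≤ n) (T : Finset ℕ) :
    ((lvl n).filter (fun N => ∃ t ∈ T, ∀ i, k ≤ i → i < p → N.testBit i = t.testBit i)).card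
      ≤ 2 ^ (n - p) * 2 ^ k * T.card := by
  have hsub : (lvl n).filter (fun N => ∃ t ∈ T, ∀ i, k ≤ i → i < p → N.testBit i = t.testBit i)
      ⊆ ((Finset.range (2 ^ (n - p)) ×ˢ Finset.range (2 ^ k)) ×ˢ T).image
        (fun z => 2 ^ p * (2 ^ (n - p) + z.1.1) + (2 ^ k * ((z.2 % 2 ^ p) / 2 ^ k) + z.1.2)) := by
    intro N hN
    simp only [Finset.mem_filter, lvl, Finset.mem_Ico] at hN
    obtain ⟨⟨h1, h2⟩, t, ht, hb⟩ := hN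
    have e1 : 2 ^ n = 2 ^ p * 2 ^ (n - p) := by rw [← pow_add]; congr 1; omega
    have hr1 : 2 ^ (n - p) ≤ N / 2 ^ p := by
      rw [Nat.le_div_iff_mul_le (by positivity)]; rw [e1] at h1; linarith
    have hr2 : N / 2 ^ p < 2 * 2 ^ (n - p) := by
      rw [Nat.div_lt_iff_lt_mul (by positivity)]; rw [pow_succ, e1] at h2; linarith
    have hw : (N % 2 ^ p) / 2 ^ k = (t % 2 ^ p) / 2 ^ k := by
      apply Nat.eq_of_testBit_eq
      intro i
      simp only [Nat.testBit_div_two_pow, Nat.testBit_mod_two_pow]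
      by_cases hi : i + k < p
      · simp [hi, hb (i + k) (by omega) hi]
      · simp [hi]
    rw [Finset.mem_image]
    refine ⟨((N / 2 ^ p - 2 ^ (n - p), (N % 2 ^ p) % 2 ^ k), t), ?_, ?_⟩
    · simp only [Finset.mem_product, Finset.mem_range]
      refine ⟨⟨by omega, Nat.mod_lt _ (by positivity)⟩, ht⟩
    · simp only
      rw [← hw, Nat.div_add_mod, Nat.add_sub_cancel' hr1, Nat.div_add_mod]
  refine (Finset.card_le_card hsub).trans (Finset.card_image_le.trans ?_)
  simp [Finset.card_product]

open Classical in
theorem count_agree (n l : ℕ) (hl : l ≤ n) (z : ℕ → Bool) :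
    ((lvl n).filter (fun N => ∀ i < l, N.testBit i = z i)).card * 2 ^ l ≤ 2 ^ n := by
  have e1 : 2 ^ n = 2 ^ (n - l) * 2 ^ l := by rw [← pow_add]; congr 1; omega
  rw [e1]
  refine Nat.mul_le_mul_right _ ?_
  refine le_trans (Finset.card_le_card ?_)
    ((count_lemma n l 0 hl {Nat.ofBits (fun i : Fin l => z i)}).trans (by simp))
  intro N hN
  simp only [Finset.mem_filter, Finset.mem_singleton, exists_eq_left] at hN ⊢
  refine ⟨hN.1, fun i _ hi => ?_⟩
  rw [hN.2 i hi, Nat.testBit_ofBits_lt _ _ hi]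

open Classical in
theorem density_lemma (B : Set ℕ) (e : ℕ → ℕ) (he : Tendsto e atTop atTop)
    (h : ∀ n, ((lvl n).filter (fun N => N ∈ B)).card * 2 ^ e n ≤ 2 ^ n) :
    B ∈ densityZero := by
  have hcard : ∀ n, (B ∩ Iio n).ncard = ((Finset.range n).filter (fun N => N ∈ B)).card := by
    intro n
    rw [← Set.ncard_coe_finset]
    congr 1
    ext x; simp [and_comm]
  have key : ∀ ε : ℝ, 0 < ε → ∃ K : ℝ, ∀ m : ℕ,
      (((Finset.range (2 ^ m)).filter (fun N => N ∈ B)).card : ℝ) ≤ K + ε * 2 ^ m := by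
    intro ε hε
    obtain ⟨c, hc⟩ := exists_pow_lt_of_lt_one hε (by norm_num : (1 / 2 : ℝ) < 1)
    obtain ⟨n0, hn0⟩ := (he.eventually_ge_atTop c).exists_forall_of_atTop
    refine ⟨2 ^ n0, fun m => ?_⟩
    induction m with
    | zero =>
      have : ((Finset.range (2 ^ 0)).filter (fun N => N ∈ B)).card ≤ 1 := by
        refine (Finset.card_filter_le _ _).trans (by simp)
      have h1 : (1 : ℝ) ≤ 2 ^ n0 := one_le_pow₀ (by norm_num)
      have : (((Finset.range (2 ^ 0)).filter (fun N => N ∈ B)).card : ℝ) ≤ 1 := by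
        exact_mod_cast this
      nlinarith
    | succ m ih =>
      by_cases hm : m + 1 ≤ n0
      · have : ((Finset.range (2 ^ (m + 1))).filter (fun N => N ∈ B)).card ≤ 2 ^ n0 := by
          refine (Finset.card_filter_le _ _).trans ?_
          rw [Finset.card_range]
          exact Nat.pow_le_pow_right (by norm_num) hm
        have : (((Finset.range (2 ^ (m + 1))).filter (fun N => N ∈ B)).card : ℝ) ≤ 2 ^ n0 := by
          exact_mod_cast this
        have : 0 ≤ ε * 2 ^ (m + 1) := by positivity
        linarith
      · have hsp : (Finset.range (2 ^ (m + 1))).filter (fun N => N ∈ B) ⊆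
            (Finset.range (2 ^ m)).filter (fun N => N ∈ B) ∪ (lvl m).filter (fun N => N ∈ B) := by
          intro N hN
          simp only [Finset.mem_filter, Finset.mem_range, Finset.mem_union, lvl,
            Finset.mem_Ico] at hN ⊢
          by_cases hh : N < 2 ^ m
          · exact Or.inl ⟨hh, hN.2⟩
          · exact Or.inr ⟨⟨by omega, hN.1⟩, hN.2⟩
        have h1 := (Finset.card_le_card hsp).trans (Finset.card_union_le _ _)
        have h1' : (((Finset.range (2 ^ (m + 1))).filter (fun N => N ∈ B)).card : ℝ) ≤
          ((Finset.range (2 ^ m)).filter (fun N => N ∈ B)).card +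
            ((lvl m).filter (fun N => N ∈ B)).card := by exact_mod_cast h1
        have h2 : (((lvl m).filter (fun N => N ∈ B)).card : ℝ) * 2 ^ e m ≤ 2 ^ m := by
          exact_mod_cast h m
        have h3 : (((lvl m).filter (fun N => N ∈ B)).card : ℝ) ≤ ε * 2 ^ m := by
          have h4 : (1 / 2 : ℝ) ^ e m ≤ ε :=
            (pow_le_pow_of_le_one (by norm_num) (by norm_num) (hn0 m (by omega))).trans hc.le
          have h5 : (1 / 2 : ℝ) ^ e m * 2 ^ e m = 1 := by
            rw [← mul_pow]; norm_num
          have h6 : (0 : ℝ) < 2 ^ m := by positivity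
          have h7 : (0 : ℝ) < (1 / 2) ^ e m := by positivity
          calc (((lvl m).filter (fun N => N ∈ B)).card : ℝ)
              = (((lvl m).filter (fun N => N ∈ B)).card * 2 ^ e m) * (1 / 2 : ℝ) ^ e m := by
                rw [mul_assoc, mul_comm (2 ^ e m : ℝ), h5, mul_one]
            _ ≤ 2 ^ m * (1 / 2 : ℝ) ^ e m := by gcongr
            _ ≤ 2 ^ m * ε := by gcongr
            _ = _ := mul_comm _ _
        have hp : (2 : ℝ) ^ (m + 1) = 2 ^ m * 2 := pow_succ _ _
        rw [hp]
        linarith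
  simp only [densityZero, mem_ofPred_eq]
  rw [Metric.tendsto_atTop]
  intro ε hε
  obtain ⟨K, hK⟩ := key (ε / 4) (by linarith)
  obtain ⟨n1, hn1⟩ := exists_nat_gt (2 * |K| / ε)
  refine ⟨n1 + 1, fun n hn => ?_⟩
  have hnpos : (0 : ℝ) < n := by
    have : 0 < n := by omega
    exact_mod_cast this
  rw [Real.dist_eq, sub_zero, abs_of_nonneg (by positivity), div_lt_iff₀ hnpos, hcard]
  have h1 : ((Finset.range n).filter (fun N => N ∈ B)).card ≤
      ((Finset.range (2 ^ (Nat.log 2 n + 1))).filter (fun N => N ∈ B)).card := by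
    apply Finset.card_le_card
    apply Finset.filter_subset_filter
    apply Finset.range_subset_range.2
    exact (Nat.lt_pow_succ_log_self (by norm_num) n).le
  have h2 : (2 : ℝ) ^ (Nat.log 2 n + 1) ≤ 2 * n := by
    have := Nat.pow_log_le_self 2 (show n ≠ 0 by omega)
    have : (2 : ℝ) ^ (Nat.log 2 n) ≤ n := by exact_mod_cast this
    rw [pow_succ]; linarith
  have h3 := hK (Nat.log 2 n + 1)
  have h1' : (((Finset.range n).filter (fun N => N ∈ B)).card : ℝ) ≤
      ((Finset.range (2 ^ (Nat.log 2 n + 1))).filter (fun N => N ∈ B)).card := by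
    exact_mod_cast h1
  have h4 : 2 * |K| < ε * n := by
    rw [div_lt_iff₀ hε] at hn1
    have : (n1 : ℝ) ≤ n := by exact_mod_cast (show n1 ≤ n by omega)
    nlinarith
  have h5 := le_abs_self K
  nlinarith

theorem densityZero_union {A B : Set ℕ} (hA : A ∈ densityZero) (hB : B ∈ densityZero) :
    A ∪ B ∈ densityZero := by
  simp only [densityZero, mem_ofPred_eq] at *
  have := hA.add hB
  rw [add_zero] at this
  refine squeeze_zero (fun n => by positivity) (fun n => ?_) this
  rw [← add_div]
  gcongr
  rw [union_inter_distrib_right]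
  exact_mod_cast Set.ncard_union_le _ _

theorem densityZero_finite {A : Set ℕ} (hA : A.Finite) : A ∈ densityZero := by
  simp only [densityZero, mem_ofPred_eq]
  refine squeeze_zero (fun n => by positivity) (fun n => ?_)
    (tendsto_const_div_atTop_nhds_zero_nat (A.ncard : ℝ))
  gcongr
  exact Set.inter_subset_left

theorem densityZero_compl_infinite {B : Set ℕ} (hB : B ∈ densityZero) : Bᶜ.Infinite := by
  intro hf
  have h := densityZero_union hB (densityZero_finite hf)
  rw [union_compl_self] at h
  simp only [densityZero, mem_ofPred_eq, univ_inter] at h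
  have h2 : Tendsto (fun n : ℕ => ((Iio n).ncard : ℝ) / (n : ℝ)) atTop (nhds 1) := by
    refine tendsto_const_nhds.congr' ?_
    filter_upwards [eventually_gt_atTop 0] with n hn
    have : (Iio n).ncard = n := by
      rw [Set.ncard_eq_toFinset_card']; simp
    rw [this, div_self]
    exact_mod_cast hn.ne'
  exact one_ne_zero (tendsto_nhds_unique h2 h)

/-! ### Closed null sets and the main construction -/

theorem exists_limit (A : Set ℕ) (hA : A.Infinite) :
    ∃ (x : ℕ → Bool) (g : ℕ → ℕ), ∀ k, g k ∈ A ∧ 2 ^ k ≤ g k ∧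
      ∀ i < k, (g k).testBit i = x i := by
  have := hA.cofinite_inf_principal_neBot
  let V : Ultrafilter ℕ := Ultrafilter.of (cofinite ⊓ 𝓟 A)
  have hV : (V : Filter ℕ) ≤ cofinite ⊓ 𝓟 A := Ultrafilter.of_le _
  have hbit : ∀ i, ∃ b : Bool, ∀ᶠ N in (V : Filter ℕ), N.testBit i = b := by
    intro i
    by_cases h : ∀ᶠ N in (V : Filter ℕ), N.testBit i = true
    · exact ⟨true, h⟩
    · refine ⟨false, ?_⟩
      have := Ultrafilter.eventually_not.2 h
      filter_upwards [this] with N hN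
      simpa using hN
  choose x hx using hbit
  have hex : ∀ k, ∃ N, N ∈ A ∧ 2 ^ k ≤ N ∧ ∀ i < k, N.testBit i = x i := by
    intro k
    have h1 : ∀ᶠ N in (V : Filter ℕ), N ∈ A := hV (mem_inf_of_right (mem_principal_self A))
    have h2 : ∀ᶠ N in (V : Filter ℕ), 2 ^ k ≤ N := by
      apply hV
      apply mem_inf_of_left
      rw [Nat.cofinite_eq_atTop]
      exact eventually_ge_atTop _
    have h3 : ∀ᶠ N in (V : Filter ℕ), ∀ i ∈ Finset.range k, N.testBit i = x i :=
      (Filter.eventually_all_finset _).2 (fun i _ => hx i)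
    obtain ⟨N, hN⟩ := (h1.and (h2.and h3)).exists
    exact ⟨N, hN.1, hN.2.1, fun i hi => hN.2.2 i (Finset.mem_range.2 hi)⟩
  choose g hg using hex
  exact ⟨x, g, hg⟩

theorem exists_glue (g : ℕ → ℕ) (hg : ∀ k, 2 ^ k ≤ g k) :
    ∃ (y : ℕ → Bool) (r : ℕ → ℕ), (∀ j, j ≤ Nat.log 2 (r j)) ∧
      (∀ j, r (j + 1) = g (Nat.log 2 (r j) + 1)) ∧
      ∀ j i, Nat.log 2 (r j) ≤ i → i < Nat.log 2 (r (j + 1)) → (r (j + 1)).testBit i = y i := by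
  classical
  let r : ℕ → ℕ := fun j => Nat.rec (g 0) (fun _ z => g (Nat.log 2 z + 1)) j
  have hr : ∀ j, r (j + 1) = g (Nat.log 2 (r j) + 1) := fun j => rfl
  have hlog : ∀ k, k ≤ Nat.log 2 (g k) := fun k =>
    Nat.le_log_of_pow_le (by norm_num) (hg k)
  have hstep : ∀ j, Nat.log 2 (r j) < Nat.log 2 (r (j + 1)) := by
    intro j
    rw [hr]
    exact hlog _
  have hmono : StrictMono (fun j => Nat.log 2 (r j)) := strictMono_nat_of_lt_succ hstep
  have hge : ∀ j, j ≤ Nat.log 2 (r j) := fun j => hmono.le_apply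
  have hex : ∀ i, ∃ j, i < Nat.log 2 (r j) := fun i => ⟨i + 1, hge (i + 1)⟩
  refine ⟨fun i => (r (Nat.find (hex i))).testBit i, r, hge, hr, ?_⟩
  intro j i h1 h2
  have : Nat.find (hex i) = j + 1 := by
    rw [Nat.find_eq_iff]
    refine ⟨h2, fun m hm => ?_⟩
    have : Nat.log 2 (r m) ≤ Nat.log 2 (r j) := hmono.monotone (show m ≤ j by omega)
    omega
  simp only [this]

open Classical in
/-- Restrictions of the members of `U` to the first `n` coordinates, coded as numbers. -/
def Tn (U : Set (ℕ → Bool)) (n : ℕ) : Finset ℕ :=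
  (Finset.range (2 ^ n)).filter (fun N => ∃ x ∈ U, ∀ i < n, N.testBit i = x i)

/-- The levels of `U` become small. -/
def SmallT (U : Set (ℕ → Bool)) : Prop :=
  ∀ k : ℕ, ∃ n0, ∀ n ≥ n0, 4 ^ k * (Tn U n).card ≤ 2 ^ n

theorem smallT_empty : SmallT ∅ := by
  intro k
  refine ⟨0, fun n _ => ?_⟩
  simp [Tn]

theorem smallT_union {U V : Set (ℕ → Bool)} (hU : SmallT U) (hV : SmallT V) :
    SmallT (U ∪ V) := by
  classical
  intro k
  obtain ⟨n1, h1⟩ := hU (k + 1)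
  obtain ⟨n2, h2⟩ := hV (k + 1)
  refine ⟨max n1 n2, fun n hn => ?_⟩
  have a1 := h1 n (le_trans (le_max_left _ _) hn)
  have a2 := h2 n (le_trans (le_max_right _ _) hn)
  have hs : Tn (U ∪ V) n ⊆ Tn U n ∪ Tn V n := by
    intro N hN
    simp only [Tn, Finset.mem_filter, Finset.mem_union, Set.mem_union] at hN ⊢
    obtain ⟨h, x, hx | hx, hb⟩ := hN
    · exact Or.inl ⟨h, x, hx, hb⟩
    · exact Or.inr ⟨h, x, hx, hb⟩
  have hc := (Finset.card_le_card hs).trans (Finset.card_union_le _ _)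
  have hc' := Nat.mul_le_mul_left (4 ^ k) hc
  rw [mul_add] at hc'
  have b1 : 4 * (4 ^ k * (Tn U n).card) ≤ 2 ^ n := by
    calc _ = 4 ^ (k + 1) * (Tn U n).card := by ring
      _ ≤ _ := a1
  have b2 : 4 * (4 ^ k * (Tn V n).card) ≤ 2 ^ n := by
    calc _ = 4 ^ (k + 1) * (Tn V n).card := by ring
      _ ≤ _ := a2
  generalize 4 ^ k * (Tn U n).card = u at *
  generalize 4 ^ k * (Tn V n).card = v at *
  generalize 2 ^ n = w at *
  omega

theorem count_cyl (s : List Bool) (n : ℕ) (hn : s.length ≤ n) :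
    (Tn (cylSet s) n).card * 2 ^ s.length ≤ 2 ^ n := by
  have e1 : 2 ^ n = 2 ^ (n - s.length) * 2 ^ s.length := by rw [← pow_add]; congr 1; omega
  rw [e1]
  refine Nat.mul_le_mul_right _ ?_
  rw [← Finset.card_range (2 ^ (n - s.length))]
  apply Finset.card_le_card_of_injOn (fun N => N / 2 ^ s.length)
  · intro N hN
    simp only [Tn, Finset.coe_filter, Finset.mem_range, mem_ofPred_eq] at hN
    simp only [Finset.coe_range, mem_Iio]
    rw [Nat.div_lt_iff_lt_mul (by positivity), ← e1]
    exact hN.1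
  · intro N hN N' hN' h
    simp only [Tn, Finset.coe_filter, Finset.mem_range, mem_ofPred_eq] at hN hN'
    simp only at h
    obtain ⟨_, x, hx, hb⟩ := hN
    obtain ⟨_, x', hx', hb'⟩ := hN'
    apply Nat.eq_of_testBit_eq
    intro i
    by_cases hi : i < s.length
    · rw [hb i (by omega), hb' i (by omega)]
      exact (hx ⟨i, hi⟩).trans (hx' ⟨i, hi⟩).symm
    · have := congrArg (fun z => Nat.testBit z (i - s.length)) h
      simp only [Nat.testBit_div_two_pow] at this
      rwa [Nat.sub_add_cancel (by omega)] at this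

theorem isOpen_cylSet (s : List Bool) : IsOpen (cylSet s) := by
  have : cylSet s = ⋂ i : Fin s.length, {x : ℕ → Bool | x i.val = s.get i} := by
    ext x; simp [cylSet]
  rw [this]
  apply isOpen_iInter_of_finite
  intro i
  have h2 : {x : ℕ → Bool | x i.val = s.get i} = (fun x => x i.val) ⁻¹' {s.get i} := rfl
  rw [h2]
  exact (isOpen_discrete _).preimage (continuous_apply _)

theorem smallT_of_closed_null {U : Set (ℕ → Bool)} (hc : IsClosedCantor U)
    (hn : IsNullCantor U) : SmallT U := by
  classical
  intro k
  have hc' : IsClosed U := hc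
  obtain ⟨s, hs, hsum⟩ := hn ((4 ^ k : ℝ≥0∞)⁻¹) (by simp)
  obtain ⟨J, hJ⟩ := hc'.isCompact.elim_finite_subcover (fun n => cylSet (s n))
    (fun n => isOpen_cylSet _) hs
  refine ⟨J.sup (fun j => (s j).length), fun n hnn => ?_⟩
  have hlen : ∀ j ∈ J, (s j).length ≤ n := fun j hj =>
    (Finset.le_sup (f := fun j => (s j).length) hj).trans hnn
  have hsub : Tn U n ⊆ J.biUnion (fun j => Tn (cylSet (s j)) n) := by
    intro N hN
    simp only [Tn, Finset.mem_filter, Finset.mem_biUnion] at hN ⊢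
    obtain ⟨h, x, hx, hb⟩ := hN
    obtain ⟨j, hj, hxj⟩ := mem_iUnion₂.1 (hJ hx)
    exact ⟨j, hj, h, x, hxj, hb⟩
  have h1 : (Tn U n).card ≤ ∑ j ∈ J, (Tn (cylSet (s j)) n).card :=
    (Finset.card_le_card hsub).trans Finset.card_biUnion_le
  have h2 : ((Tn U n).card : ℝ≥0∞) ≤ 2 ^ n * (4 ^ k)⁻¹ := by
    calc ((Tn U n).card : ℝ≥0∞) ≤ ∑ j ∈ J, ((Tn (cylSet (s j)) n).card : ℝ≥0∞) := by
          exact_mod_cast h1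
      _ ≤ ∑ j ∈ J, 2 ^ n * (2⁻¹ : ℝ≥0∞) ^ (s j).length := by
          apply Finset.sum_le_sum
          intro j hj
          have := count_cyl (s j) n (hlen j hj)
          have h3 : ((Tn (cylSet (s j)) n).card : ℝ≥0∞) * 2 ^ (s j).length ≤ 2 ^ n := by
            exact_mod_cast this
          rw [← ENNReal.inv_pow, ← div_eq_mul_inv]
          rw [ENNReal.le_div_iff_mul_le (by simp) (by simp)]
          exact h3
      _ = 2 ^ n * ∑ j ∈ J, (2⁻¹ : ℝ≥0∞) ^ (s j).length := by rw [Finset.mul_sum]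
      _ ≤ 2 ^ n * (4 ^ k)⁻¹ := by
          gcongr
          exact (ENNReal.sum_le_tsum J).trans hsum
  rw [← div_eq_mul_inv, ENNReal.le_div_iff_mul_le (by simp) (by simp)] at h2
  rw [mul_comm]
  exact_mod_cast h2

/-- The least `k` with `n < f k`. -/
def kk (f : ℕ → ℕ) (n : ℕ) : ℕ := sInf {k | n < f k}

theorem kk_le {f : ℕ → ℕ} {n q : ℕ} (h : n < f q) : kk f n ≤ q := Nat.sInf_le h

theorem kk_spec {f : ℕ → ℕ} (hf : ∀ k, k < f k) (n : ℕ) : n < f (kk f n) :=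
  Nat.sInf_mem (s := {k | n < f k}) ⟨n, hf n⟩

theorem le_of_lt_kk {f : ℕ → ℕ} {n k : ℕ} (h : k < kk f n) : f k ≤ n := by
  by_contra hh
  exact absurd (kk_le (not_le.1 hh)) (not_le.2 h)

theorem kk_tendsto {f : ℕ → ℕ} (hf : ∀ k, k < f k) : Tendsto (kk f) atTop atTop := by
  rw [tendsto_atTop_atTop]
  intro K
  refine ⟨(Finset.range K).sup f, fun n hn => ?_⟩
  by_contra hh
  have h1 := kk_spec hf n
  have := (Finset.le_sup (f := f) (Finset.mem_range.2 (not_le.1 hh))).trans hn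
  omega

theorem kk_self_le {f : ℕ → ℕ} (hf : ∀ k, k < f k) (n : ℕ) : kk f n ≤ n := kk_le (hf n)

theorem exists_B {E : Set (ℕ → Bool)} (hE : E ∈ EIdeal) :
    ∃ B ∈ densityZero, ∀ (x y : ℕ → Bool) (g r : ℕ → ℕ),
      (∀ k, 2 ^ k ≤ g k ∧ ∀ i < k, (g k).testBit i = x i) →
      (∀ j, j ≤ Nat.log 2 (r j)) →
      (∀ j, r (j + 1) = g (Nat.log 2 (r j) + 1)) →
      (∀ j i, Nat.log 2 (r j) ≤ i → i < Nat.log 2 (r (j + 1)) →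
        (r (j + 1)).testBit i = y i) →
      x ∈ E → y ∈ E → (range g ∩ B).Infinite := by
  classical
  obtain ⟨C, hC, hEC⟩ := hE
  let U : ℕ → Set (ℕ → Bool) := fun k => {x | ∃ i < k, x ∈ C i}
  have hU : ∀ k, SmallT (U k) := by
    intro k
    induction k with
    | zero =>
      have : U 0 = ∅ := by ext x; simp [U]
      rw [this]; exact smallT_empty
    | succ k ih =>
      have : U (k + 1) = U k ∪ C k := by
        ext x
        simp only [U, mem_ofPred_eq, mem_union]
        constructor
        · rintro ⟨i, hi, hx⟩
          rcases Nat.lt_succ_iff_lt_or_eq.1 hi with h | h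
          · exact Or.inl ⟨i, h, hx⟩
          · exact Or.inr (h ▸ hx)
        · rintro (⟨i, hi, hx⟩ | hx)
          · exact ⟨i, by omega, hx⟩
          · exact ⟨k, by omega, hx⟩
      rw [this]
      exact smallT_union ih (smallT_of_closed_null (hC k).1 (hC k).2)
  choose f0 hf0 using fun k => hU (k + 1) (k + 1)
  let f : ℕ → ℕ := fun k => ∑ i ∈ Finset.range (k + 1), (f0 i + 1)
  have hfmono : Monotone f := by
    apply monotone_nat_of_le_succ
    intro k
    simp only [f]
    rw [Finset.sum_range_succ _ (k + 1)]
    omega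
  have hff0 : ∀ k, f0 k ≤ f k := by
    intro k
    simp only [f]
    rw [Finset.sum_range_succ]
    omega
  have hf : ∀ k, k < f k := by
    intro k
    simp only [f]
    rw [Finset.sum_add_distrib]
    simp
    omega
  have hP : ∀ n, 4 ^ (kk f n) * (Tn (U (kk f n)) n).card ≤ 2 ^ n := by
    intro n
    rcases Nat.eq_zero_or_pos (kk f n) with h | h
    · rw [h]
      simp only [pow_zero, one_mul]
      exact (Finset.card_filter_le _ _).trans (by simp)
    · obtain ⟨m, hm⟩ : ∃ m, kk f n = m + 1 := ⟨kk f n - 1, by omega⟩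
      rw [hm]
      exact hf0 m n ((hff0 m).trans (le_of_lt_kk (by omega)))
  let Sp : ℕ → ℕ → Prop := fun p N =>
    ∃ t ∈ U (kk f p), ∀ i, kk f p ≤ i → i < p → N.testBit i = t i
  have hdens : ∀ p : ℕ → ℕ, (∀ n, p n ≤ n) → Tendsto p atTop atTop →
      {N | Sp (p (Nat.log 2 N)) N} ∈ densityZero := by
    intro p hp hpt
    apply density_lemma _ (fun n => kk f (p n)) ((kk_tendsto hf).comp hpt)
    intro n
    have h1 : ((lvl n).filter (fun N => N ∈ {N | Sp (p (Nat.log 2 N)) N})).card ≤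
        2 ^ (n - p n) * 2 ^ (kk f (p n)) * (Tn (U (kk f (p n))) (p n)).card := by
      refine le_trans (Finset.card_le_card ?_) (count_lemma n (p n) (kk f (p n)) (hp n) _)
      intro N hN
      rw [Finset.mem_filter] at hN ⊢
      refine ⟨hN.1, ?_⟩
      have h2 : Sp (p (Nat.log 2 N)) N := hN.2
      rw [log_of_mem_lvl hN.1] at h2
      obtain ⟨t, ht, hb⟩ := h2
      refine ⟨Nat.ofBits (fun i : Fin (p n) => t i), ?_, ?_⟩
      · simp only [Tn, Finset.mem_filter, Finset.mem_range]
        refine ⟨Nat.ofBits_lt_two_pow _, t, ht, fun i hi => ?_⟩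
        rw [Nat.testBit_ofBits_lt _ _ hi]
      · intro i hi1 hi2
        rw [hb i hi1 hi2, Nat.testBit_ofBits_lt _ _ hi2]
    have h3 := hP (p n)
    have e1 : 2 ^ n = 2 ^ (n - p n) * 2 ^ p n := by
      rw [← pow_add]; congr 1; have := hp n; omega
    have e2 : 4 ^ (kk f (p n)) = 2 ^ (kk f (p n)) * 2 ^ (kk f (p n)) := by
      rw [← mul_pow]; norm_num
    rw [e2] at h3
    calc _ ≤ (2 ^ (n - p n) * 2 ^ (kk f (p n)) * (Tn (U (kk f (p n))) (p n)).card)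
            * 2 ^ (kk f (p n)) := Nat.mul_le_mul_right _ h1
      _ = 2 ^ (n - p n) *
          (2 ^ (kk f (p n)) * 2 ^ (kk f (p n)) * (Tn (U (kk f (p n))) (p n)).card) := by ring
      _ ≤ 2 ^ (n - p n) * 2 ^ p n := Nat.mul_le_mul_left _ h3
      _ = _ := e1.symm
  refine ⟨{N | Sp (Nat.log 2 N) N} ∪ {N | Sp (kk f (Nat.log 2 N)) N},
    densityZero_union (hdens (fun n => n) (fun n => le_rfl) tendsto_id)
      (hdens (kk f) (kk_self_le hf) (kk_tendsto hf)), ?_⟩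
  intro x y g r hg hr1 hr2 hr3 hx hy
  have hgl : ∀ q, q ≤ Nat.log 2 (g q) := fun k =>
    Nat.le_log_of_pow_le (by norm_num) (hg k).1
  obtain ⟨mx, hmx⟩ := mem_iUnion.1 (hEC hx)
  obtain ⟨my, hmy⟩ := mem_iUnion.1 (hEC hy)
  apply Set.infinite_of_forall_exists_gt
  intro M
  by_cases hcase : ∀ᶠ q in atTop, f q ≤ Nat.log 2 (g q)
  · obtain ⟨q0, hq0⟩ := hcase.exists_forall_of_atTop
    let j := max q0 (max my M)
    have hj1 : q0 ≤ j := le_max_left _ _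
    have hj2 : my ≤ j := (le_max_left _ _).trans (le_max_right _ _)
    have hj3 : M ≤ j := (le_max_right _ _).trans (le_max_right _ _)
    have hrj := hr1 j
    have h1 := hq0 (Nat.log 2 (r j) + 1) (by omega)
    rw [← hr2] at h1
    have h2 : Nat.log 2 (r j) + 1 < kk f (Nat.log 2 (r (j + 1))) := by
      by_contra hh
      have a := hfmono (not_lt.1 hh)
      have b := kk_spec hf (Nat.log 2 (r (j + 1)))
      omega
    refine ⟨r (j + 1), ⟨⟨_, (hr2 j).symm⟩, Or.inl ?_⟩, ?_⟩
    · refine ⟨y, ⟨my, by omega, hmy⟩, fun i hi1 hi2 => hr3 j i (by omega) hi2⟩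
    · have := hr1 (j + 1)
      have h3 : Nat.log 2 (r (j + 1)) ≤ r (j + 1) := Nat.log_le_self _ _
      omega
  · have hfr : ∃ᶠ q in atTop, Nat.log 2 (g q) < f q := by
      rw [not_eventually] at hcase
      exact hcase.mono (fun q hq => not_le.1 hq)
    have ht : Tendsto (fun q => kk f (kk f (Nat.log 2 (g q)))) atTop atTop :=
      (kk_tendsto hf).comp ((kk_tendsto hf).comp (tendsto_atTop_mono hgl tendsto_id))
    obtain ⟨q, hq, hq1, hq2⟩ := (hfr.and_eventually
      ((ht.eventually_gt_atTop mx).and (eventually_gt_atTop M))).exists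
    refine ⟨g q, ⟨⟨q, rfl⟩, Or.inr ?_⟩, ?_⟩
    · refine ⟨x, ⟨mx, hq1, hmx⟩, fun i _ hi2 => (hg q).2 i ?_⟩
      exact lt_of_lt_of_le hi2 (kk_le hq)
    · have := hgl q
      have h3 : Nat.log 2 (g q) ≤ g q := Nat.log_le_self _ _
      omega

theorem main_lemma : ∃ (X Y : Set ℕ → (ℕ → Bool)) (B : Set (ℕ → Bool) → Set ℕ),
    (∀ E ∈ EIdeal, B E ∈ densityZero) ∧
    ∀ A : Set ℕ, A.Infinite → ∀ E ∈ EIdeal, X A ∈ E → Y A ∈ E → (A ∩ B E).Infinite := by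
  classical
  have h1 : ∀ A : Set ℕ, ∃ (x y : ℕ → Bool), A.Infinite → ∃ (g r : ℕ → ℕ),
      (∀ k, g k ∈ A) ∧
      (∀ k, 2 ^ k ≤ g k ∧ ∀ i < k, (g k).testBit i = x i) ∧
      (∀ j, j ≤ Nat.log 2 (r j)) ∧
      (∀ j, r (j + 1) = g (Nat.log 2 (r j) + 1)) ∧
      (∀ j i, Nat.log 2 (r j) ≤ i → i < Nat.log 2 (r (j + 1)) →
        (r (j + 1)).testBit i = y i) := by
    intro A
    by_cases hA : A.Infinite
    · obtain ⟨x, g, hg⟩ := exists_limit A hA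
      obtain ⟨y, r, h1, h2, h3⟩ := exists_glue g (fun k => (hg k).2.1)
      exact ⟨x, y, fun _ => ⟨g, r, fun k => (hg k).1, fun k => (hg k).2, h1, h2, h3⟩⟩
    · exact ⟨fun _ => false, fun _ => false, fun h => absurd h hA⟩
  choose X Y hXY using h1
  have h2 : ∀ E : Set (ℕ → Bool), ∃ B : Set ℕ, ∀ _ : E ∈ EIdeal,
      B ∈ densityZero ∧ ∀ (x y : ℕ → Bool) (g r : ℕ → ℕ),
      (∀ k, 2 ^ k ≤ g k ∧ ∀ i < k, (g k).testBit i = x i) →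
      (∀ j, j ≤ Nat.log 2 (r j)) →
      (∀ j, r (j + 1) = g (Nat.log 2 (r j) + 1)) →
      (∀ j i, Nat.log 2 (r j) ≤ i → i < Nat.log 2 (r (j + 1)) →
        (r (j + 1)).testBit i = y i) →
      x ∈ E → y ∈ E → (range g ∩ B).Infinite := by
    intro E
    by_cases hE : E ∈ EIdeal
    · obtain ⟨B, hB, h⟩ := exists_B hE
      exact ⟨B, fun _ => ⟨hB, h⟩⟩
    · exact ⟨∅, fun h => absurd h hE⟩
  choose B hB using h2
  refine ⟨X, Y, B, fun E hE => (hB E hE).1, ?_⟩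
  intro A hA E hE hx hy
  obtain ⟨g, r, hgA, h1, h2, h3, h4⟩ := hXY A hA
  refine ((hB E hE).2 (X A) (Y A) g r h1 h2 h3 h4 hx hy).mono ?_
  apply inter_subset_inter_left
  rintro _ ⟨k, rfl⟩
  exact hgA k

/-! ### Basic facts on the ideal generated by closed null sets -/

theorem E_subset {A B : Set (ℕ → Bool)} (h : A ⊆ B) (hB : B ∈ EIdeal) : A ∈ EIdeal := by
  obtain ⟨C, hC, h2⟩ := hB
  exact ⟨C, hC, h.trans h2⟩

theorem E_iUnion {A : ℕ → Set (ℕ → Bool)} (h : ∀ n, A n ∈ EIdeal) :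
    (⋃ n, A n) ∈ EIdeal := by
  choose C hC hA using h
  refine ⟨fun m => C m.unpair.1 m.unpair.2, fun m => hC _ _, ?_⟩
  intro x hx
  obtain ⟨n, hn⟩ := mem_iUnion.1 hx
  obtain ⟨k, hk⟩ := mem_iUnion.1 (hA n hn)
  exact mem_iUnion.2 ⟨Nat.pair n k, by simpa using hk⟩

theorem E_union {A B : Set (ℕ → Bool)} (hA : A ∈ EIdeal) (hB : B ∈ EIdeal) :
    A ∪ B ∈ EIdeal := by
  refine E_subset ?_ (E_iUnion (A := fun n => if n = 0 then A else B) ?_)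
  · rintro x (hx | hx)
    · exact mem_iUnion.2 ⟨0, by simpa using hx⟩
    · exact mem_iUnion.2 ⟨1, by simpa using hx⟩
  · intro n
    by_cases hn : n = 0
    · simpa [hn] using hA
    · simpa [hn] using hB

theorem null_of_finite (C : Set (ℕ → Bool))
    (h : ∀ K : ℕ, ∃ (p : ℕ) (W : Finset ℕ), W.card * 2 ^ K ≤ 2 ^ p ∧
      ∀ x ∈ C, ∃ N ∈ W, ∀ i < p, N.testBit i = x i) : IsNullCantor C := by
  classical
  intro ε hε
  obtain ⟨K, hK⟩ := ENNReal.exists_inv_two_pow_lt hε.ne'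
  obtain ⟨p, W, hW, hC⟩ := h (K + 2)
  refine ⟨fun n => if n ∈ W then List.ofFn (fun i : Fin p => n.testBit i)
    else List.replicate (K + 2 + n) false, ?_, ?_⟩
  · intro x hx
    obtain ⟨N, hN, hb⟩ := hC x hx
    refine mem_iUnion.2 ⟨N, ?_⟩
    simp only [if_pos hN]
    rintro ⟨i, hi⟩
    rw [List.length_ofFn] at hi
    simp [hb i hi]
  · refine le_trans ?_ hK.le
    have e : ∀ n : ℕ, (2⁻¹ : ℝ≥0∞) ^ (if n ∈ W then List.ofFn (fun i : Fin p => n.testBit i)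
        else List.replicate (K + 2 + n) false).length ≤
        (if n ∈ W then (2⁻¹ : ℝ≥0∞) ^ p else 0) + (2⁻¹ : ℝ≥0∞) ^ (K + 2) * (2⁻¹ : ℝ≥0∞) ^ n := by
      intro n
      split_ifs
      · simp
      · simp [pow_add]
    refine (ENNReal.tsum_le_tsum e).trans ?_
    rw [ENNReal.tsum_add, ENNReal.tsum_mul_left]
    have e1 : (∑' n : ℕ, if n ∈ W then (2⁻¹ : ℝ≥0∞) ^ p else 0) ≤ (2⁻¹ : ℝ≥0∞) ^ (K + 2) := by
      rw [tsum_eq_sum (s := W) (fun b hb => if_neg hb)]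
      rw [Finset.sum_congr rfl (fun b hb => if_pos hb), Finset.sum_const, nsmul_eq_mul]
      have hW' : (W.card : ℝ≥0∞) * 2 ^ (K + 2) ≤ 2 ^ p := by exact_mod_cast hW
      rw [← ENNReal.inv_pow, ← ENNReal.inv_pow, ← div_eq_mul_inv]
      apply ENNReal.div_le_of_le_mul
      rw [mul_comm, ← div_eq_mul_inv, ENNReal.le_div_iff_mul_le (by simp) (by simp)]
      exact hW'
    have e2 : (∑' n : ℕ, (2⁻¹ : ℝ≥0∞) ^ n) = 2 := by
      rw [ENNReal.tsum_geometric]; simp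
    rw [e2]
    refine (add_le_add_left e1 _).trans ?_
    have e3 : (2⁻¹ : ℝ≥0∞) ^ (K + 2) + (2⁻¹ : ℝ≥0∞) ^ (K + 2) * 2
        ≤ (2⁻¹ : ℝ≥0∞) ^ (K + 2) * 4 := by
      rw [show (4 : ℝ≥0∞) = 1 + 1 + 2 by norm_num, mul_add, mul_add, mul_one]
      gcongr
      exact le_self_add
    refine e3.trans ?_
    rw [pow_add, mul_assoc]
    have e4 : (2⁻¹ : ℝ≥0∞) ^ 2 * 4 = 1 := by
      rw [← ENNReal.inv_pow, show (4 : ℝ≥0∞) = 2 ^ 2 by norm_num]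
      exact ENNReal.inv_mul_cancel (by simp) (by simp)
    rw [e4, mul_one]

theorem E_singleton (x : ℕ → Bool) : {x} ∈ EIdeal := by
  refine ⟨fun _ => {x}, fun _ => ⟨?_, ?_⟩, ?_⟩
  · have : IsClosed ({x} : Set (ℕ → Bool)) := isClosed_singleton
    exact this
  · apply null_of_finite
    intro K
    refine ⟨K, {Nat.ofBits (fun i : Fin K => x i)}, by simp, ?_⟩
    rintro y rfl
    refine ⟨_, Finset.mem_singleton_self _, fun i hi => ?_⟩
    rw [Nat.testBit_ofBits_lt _ _ hi]
  · intro y hy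
    exact mem_iUnion.2 ⟨0, hy⟩

theorem E_countable_sUnion {𝒜 : Set (Set (ℕ → Bool))} (h : 𝒜.Countable) (hA : 𝒜 ⊆ EIdeal) :
    ⋃₀ 𝒜 ∈ EIdeal := by
  rcases 𝒜.eq_empty_or_nonempty with rfl | hne
  · refine E_subset ?_ (E_singleton (fun _ => false))
    simp
  · obtain ⟨f, rfl⟩ := h.exists_eq_range hne
    rw [sUnion_range]
    exact E_iUnion (fun n => hA ⟨n, rfl⟩)

theorem E_countable {S : Set (ℕ → Bool)} (h : S.Countable) : S ∈ EIdeal := by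
  have : S = ⋃₀ ((fun x => ({x} : Set (ℕ → Bool))) '' S) := by
    ext x; simp
  rw [this]
  apply E_countable_sUnion (h.image _)
  rintro _ ⟨x, _, rfl⟩
  exact E_singleton x

theorem nonStar_nonempty : (nonStarFam densityZero).Nonempty :=
  ⟨_, {A | A.Infinite}, fun _ h => h,
    fun B hB => ⟨Bᶜ, densityZero_compl_infinite hB, by simp⟩, rfl⟩

theorem covStar_le (𝒜 : Set (Set ℕ)) (h1 : 𝒜 ⊆ densityZero)
    (h2 : ∀ B : Set ℕ, B.Infinite → ∃ A ∈ 𝒜, (A ∩ B).Infinite) :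
    sInf (covStarFam densityZero) ≤ Cardinal.mk 𝒜 :=
  csInf_le' ⟨𝒜, h1, h2, rfl⟩

theorem nonIdeal_le (S : Set (ℕ → Bool)) (h : S ∉ EIdeal) :
    nonIdeal EIdeal ≤ Cardinal.mk S :=
  csInf_le' ⟨S, h, rfl⟩

theorem part1 : nonIdeal EIdeal ≤ sInf (nonStarFam densityZero) := by
  obtain ⟨X, Y, B, hB, hm⟩ := main_lemma
  obtain ⟨𝒜, h1, h2, h3⟩ := csInf_mem nonStar_nonempty
  have hS : X '' 𝒜 ∪ Y '' 𝒜 ∉ EIdeal := by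
    intro hS
    obtain ⟨A, hA, hf⟩ := h2 _ (hB _ hS)
    exact hm A (h1 A hA) _ hS (Or.inl ⟨A, hA, rfl⟩) (Or.inr ⟨A, hA, rfl⟩) hf
  have hinf : ℵ₀ ≤ Cardinal.mk 𝒜 := by
    by_contra hlt
    have hc : 𝒜.Countable := Cardinal.le_aleph0_iff_set_countable.1 (not_le.1 hlt).le
    exact hS (E_countable ((hc.image _).union (hc.image _)))
  rw [← h3]
  refine (nonIdeal_le _ hS).trans ?_
  refine (Cardinal.mk_union_le _ _).trans ?_
  refine (add_le_add Cardinal.mk_image_le Cardinal.mk_image_le).trans ?_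
  exact (Cardinal.add_eq_self hinf).le

theorem part2 : sInf (covStarFam densityZero) ≤ covIdeal EIdeal := by
  obtain ⟨X, Y, B, hB, hm⟩ := main_lemma
  have hne : {c | ∃ 𝒜 : Set (Set (ℕ → Bool)), 𝒜 ⊆ EIdeal ∧ ⋃₀ 𝒜 = Set.univ ∧
      Cardinal.mk 𝒜 = c}.Nonempty := by
    refine ⟨_, range (fun x : ℕ → Bool => {x}), ?_, ?_, rfl⟩
    · rintro _ ⟨x, rfl⟩
      exact E_singleton x
    · ext x; simp
  obtain ⟨𝒜, h1, h2, h3⟩ := csInf_mem hne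
  change _ ≤ sInf _
  rw [← h3]
  have hx : ∀ x, ∃ E ∈ 𝒜, x ∈ E := fun x => mem_sUnion.1 (h2 ▸ mem_univ x)
  by_cases hinf : ℵ₀ ≤ Cardinal.mk 𝒜
  · refine (covStar_le ((fun p : Set (ℕ → Bool) × Set (ℕ → Bool) => B (p.1 ∪ p.2)) '' (𝒜 ×ˢ 𝒜))
      ?_ ?_).trans ?_
    · rintro _ ⟨p, ⟨hp1, hp2⟩, rfl⟩
      exact hB _ (E_union (h1 hp1) (h1 hp2))
    · intro A hA
      obtain ⟨E, hE, hxE⟩ := hx (X A)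
      obtain ⟨E', hE', hyE⟩ := hx (Y A)
      refine ⟨_, ⟨(E, E'), ⟨hE, hE'⟩, rfl⟩, ?_⟩
      rw [inter_comm]
      exact hm A hA _ (E_union (h1 hE) (h1 hE')) (Or.inl hxE) (Or.inr hyE)
    · refine Cardinal.mk_image_le.trans ?_
      rw [Cardinal.mk_setProd]
      simp [Cardinal.mul_eq_self hinf]
  · have hc : 𝒜.Countable := Cardinal.le_aleph0_iff_set_countable.1 (not_le.1 hinf).le
    have hu : (univ : Set (ℕ → Bool)) ∈ EIdeal := h2 ▸ E_countable_sUnion hc h1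
    refine (covStar_le {B univ} ?_ ?_).trans ?_
    · rintro _ rfl
      exact hB _ hu
    · intro A hA
      refine ⟨_, rfl, ?_⟩
      rw [inter_comm]
      exact hm A hA _ hu (mem_univ _) (mem_univ _)
    · rw [Cardinal.mk_singleton, Cardinal.one_le_iff_ne_zero, Cardinal.mk_ne_zero_iff]
      obtain ⟨E, hE, _⟩ := hx (fun _ => false)
      exact ⟨⟨E, hE⟩⟩

/-! ### Dominating families and the covering number -/

/-- An increasing sequence outgrowing `g`. -/
def vv (g : ℕ → ℕ) : ℕ → ℕ
  | 0 => 0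
  | i + 1 => max (vv g i) (g (vv g i)) + 1

theorem vv_strictMono (g : ℕ → ℕ) : StrictMono (vv g) := by
  apply strictMono_nat_of_lt_succ
  intro i
  have : vv g (i + 1) = max (vv g i) (g (vv g i)) + 1 := rfl
  rw [this]
  have := le_max_left (vv g i) (g (vv g i))
  omega

theorem lt_vv (g : ℕ → ℕ) (i : ℕ) : g (vv g i) < vv g (i + 1) := by
  have : vv g (i + 1) = max (vv g i) (g (vv g i)) + 1 := rfl
  rw [this]
  have := le_max_right (vv g i) (g (vv g i))
  omega

/-- The index of the interval containing `n`. -/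
def idx (g : ℕ → ℕ) (n : ℕ) : ℕ := Nat.findGreatest (fun i => vv g i ≤ n) n

theorem le_idx (g : ℕ → ℕ) {i n : ℕ} (h : vv g i ≤ n) : i ≤ idx g n :=
  Nat.le_findGreatest (((vv_strictMono g).le_apply).trans h) h

theorem vv_idx (g : ℕ → ℕ) (n : ℕ) : vv g (idx g n) ≤ n :=
  Nat.findGreatest_spec (P := fun i => vv g i ≤ n) (Nat.zero_le n) (Nat.zero_le n)

theorem idx_eq (g : ℕ → ℕ) {i n : ℕ} (h : vv g i ≤ n) (h' : n < vv g (i + 1)) : idx g n = i := by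
  apply le_antisymm _ (le_idx g h)
  have := (vv_strictMono g).lt_iff_lt.1 ((vv_idx g n).trans_lt h')
  omega

/-- The density zero set attached to `g`. -/
def Bg (g : ℕ → ℕ) : Set ℕ :=
  {N | ∀ j < Nat.log 2 (idx g (Nat.log 2 N)), N.testBit j = (idx g (Nat.log 2 N)).testBit j}

theorem Bg_dens (g : ℕ → ℕ) : Bg g ∈ densityZero := by
  classical
  apply density_lemma _ (fun n => Nat.log 2 (idx g n))
  · rw [tendsto_atTop]
    intro K
    filter_upwards [eventually_ge_atTop (vv g (2 ^ K))] with n hn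
    exact Nat.le_log_of_pow_le (by norm_num) (le_idx g hn)
  · intro n
    have hl : Nat.log 2 (idx g n) ≤ n := (Nat.log_le_self _ _).trans (Nat.findGreatest_le n)
    refine le_trans (Nat.mul_le_mul_right _ (Finset.card_le_card ?_))
      (count_agree n (Nat.log 2 (idx g n)) hl (fun j => (idx g n).testBit j))
    intro N hN
    rw [Finset.mem_filter] at hN ⊢
    refine ⟨hN.1, ?_⟩
    have h2 := hN.2
    simp only [Bg, mem_ofPred_eq] at h2
    rwa [log_of_mem_lvl hN.1] at h2

theorem lemmaD (F : Set (ℕ → ℕ)) (hF : ∀ f, ∃ g ∈ F, LeStar f g) :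
    sInf (covStarFam densityZero) ≤ Cardinal.mk F := by
  refine (covStar_le (Bg '' F) ?_ ?_).trans Cardinal.mk_image_le
  · rintro _ ⟨g, _, rfl⟩
    exact Bg_dens g
  · intro A hA
    obtain ⟨x, a, ha⟩ := exists_limit A hA
    obtain ⟨g, hg, hdom⟩ := hF (fun q => Nat.log 2 (a q))
    obtain ⟨q0, hq0⟩ := Filter.Eventually.exists_forall_of_atTop hdom
    refine ⟨_, ⟨g, hg, rfl⟩, ?_⟩
    apply Set.infinite_of_forall_exists_gt
    intro M
    let l := max q0 M
    have hl1 : q0 ≤ l := le_max_left _ _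
    have hl2 : M ≤ l := le_max_right _ _
    let i := 2 ^ l + Nat.ofBits (fun j : Fin l => x j)
    have hi1 : 2 ^ l ≤ i := Nat.le_add_right _ _
    have hlog : Nat.log 2 i = l := by
      apply Nat.log_eq_of_pow_le_of_lt_pow hi1
      have : Nat.ofBits (fun j : Fin l => x j) < 2 ^ l := Nat.ofBits_lt_two_pow _
      rw [pow_succ]
      omega
    have hbit : ∀ j < l, i.testBit j = x j := by
      intro j hj
      rw [Nat.testBit_two_pow_add_gt hj, Nat.testBit_ofBits_lt _ _ hj]
    have hll : l < 2 ^ l := Nat.lt_two_pow_self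
    have hvi : i ≤ vv g i := (vv_strictMono g).le_apply
    obtain ⟨h1, h2, h3⟩ := ha (vv g i)
    have h4 : vv g i ≤ Nat.log 2 (a (vv g i)) := Nat.le_log_of_pow_le (by norm_num) h2
    have h5 : Nat.log 2 (a (vv g i)) ≤ g (vv g i) := hq0 _ (by omega)
    have h6 : idx g (Nat.log 2 (a (vv g i))) = i := idx_eq g h4 (h5.trans_lt (lt_vv g i))
    refine ⟨a (vv g i), ⟨?_, h1⟩, ?_⟩
    · simp only [Bg, mem_ofPred_eq]
      rw [h6, hlog]
      intro j hj
      rw [h3 j (by omega), hbit j hj]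
    · have : Nat.log 2 (a (vv g i)) ≤ a (vv g i) := Nat.log_le_self _ _
      omega

/-! ### The third inequality -/

theorem exists_M (q : ℕ) : ∃ M : ℕ, (2 ^ q - 1) ^ M * 2 ^ q ≤ (2 ^ q) ^ M := by
  have h1 : (0 : ℝ) < 2 ^ q := by positivity
  have h2 : ((2 : ℝ) ^ q - 1) / 2 ^ q < 1 := by
    rw [div_lt_one h1]; linarith
  obtain ⟨M, hM⟩ := exists_pow_lt_of_lt_one (show (0 : ℝ) < 1 / 2 ^ q by positivity) h2
  refine ⟨M, ?_⟩
  rw [div_pow, div_lt_div_iff₀ (by positivity) h1] at hM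
  have h3 : ((2 ^ q - 1 : ℕ) : ℝ) = 2 ^ q - 1 := by
    rw [Nat.cast_sub Nat.one_le_two_pow]; simp
  have : (((2 ^ q - 1) ^ M * 2 ^ q : ℕ) : ℝ) ≤ (((2 ^ q) ^ M : ℕ) : ℝ) := by
    rw [Nat.cast_mul, Nat.cast_pow, h3]
    push_cast
    linarith
  exact_mod_cast this

open Classical in
/-- Strings of length `m ^ 2` avoiding the patterns `b j`, for `j ∈ L`. -/
def Wm (q : ℕ) (L : Finset ℕ) (b : ℕ → ℕ → Bool) (m : ℕ) : Finset ℕ :=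
  (Finset.range (2 ^ (m ^ 2))).filter
    (fun N => ∀ j ∈ L, j < m → ¬ ∀ i < q, N.testBit (j ^ 2 + i) = b j i)

theorem Wm_mod {q : ℕ} {L : Finset ℕ} (hL : ∀ j ∈ L, q ≤ j) {b : ℕ → ℕ → Bool} {m N : ℕ}
    (hN : N ∈ Wm q L b (m + 1)) : N % 2 ^ (m ^ 2) ∈ Wm q L b m := by
  classical
  simp only [Wm, Finset.mem_filter, Finset.mem_range] at hN ⊢
  refine ⟨Nat.mod_lt _ (by positivity), fun j hj hjm hh => hN.2 j hj (by omega) fun i hi => ?_⟩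
  rw [← hh i hi, Nat.testBit_mod_two_pow]
  have h1 := hL j hj
  have : j ^ 2 + i < m ^ 2 := by nlinarith
  simp [this]

theorem Wm_count (q : ℕ) (L : Finset ℕ) (hL : ∀ j ∈ L, q ≤ j) (b : ℕ → ℕ → Bool) (m : ℕ) :
    (Wm q L b m).card * (2 ^ q) ^ (L.filter (· < m)).card ≤
      (2 ^ q - 1) ^ (L.filter (· < m)).card * 2 ^ (m ^ 2) := by
  classical
  induction m with
  | zero =>
    simp [Wm]
  | succ m ih =>
    have hsq : (m + 1) ^ 2 = m ^ 2 + (2 * m + 1) := by ring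
    by_cases hm : m ∈ L
    · have hf : (L.filter (· < m + 1)) = insert m (L.filter (· < m)) := by
        ext j
        simp only [Finset.mem_filter, Finset.mem_insert]
        constructor
        · rintro ⟨h1, h2⟩
          by_cases h : j = m
          · exact Or.inl h
          · exact Or.inr ⟨h1, by omega⟩
        · rintro (rfl | ⟨h1, h2⟩)
          · exact ⟨hm, by omega⟩
          · exact ⟨h1, by omega⟩
      have hc : (L.filter (· < m + 1)).card = (L.filter (· < m)).card + 1 := by
        rw [hf, Finset.card_insert_of_notMem (by simp)]
      have hq := hL m hm
      have hcard : (Wm q L b (m + 1)).card ≤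
          (Wm q L b m).card * ((2 ^ q - 1) * 2 ^ (2 * m + 1 - q)) := by
        have hlt : Nat.ofBits (fun i : Fin q => b m i) < 2 ^ q := Nat.ofBits_lt_two_pow _
        have : (Wm q L b m ×ˢ (((Finset.range (2 ^ q)).erase (Nat.ofBits (fun i : Fin q => b m i)))
            ×ˢ Finset.range (2 ^ (2 * m + 1 - q)))).card =
            (Wm q L b m).card * ((2 ^ q - 1) * 2 ^ (2 * m + 1 - q)) := by
          rw [Finset.card_product, Finset.card_product, Finset.card_erase_of_mem
            (Finset.mem_range.2 hlt), Finset.card_range, Finset.card_range]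
        rw [← this]
        apply Finset.card_le_card_of_injOn (fun N => (N % 2 ^ (m ^ 2),
          (N / 2 ^ (m ^ 2) % 2 ^ q, N / 2 ^ (m ^ 2) / 2 ^ q)))
        · intro N hN
          have hN1 := Wm_mod hL (Finset.mem_coe.1 hN)
          have hN' := Finset.mem_coe.1 hN
          simp only [Wm, Finset.mem_filter, Finset.mem_range] at hN'
          simp only [Finset.coe_product, Set.mem_prod, Finset.mem_coe, Finset.mem_erase,
            Finset.mem_range]
          refine ⟨hN1, ⟨?_, Nat.mod_lt _ (by positivity)⟩, ?_⟩
          · intro heq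
            apply hN'.2 m hm (by omega)
            intro i hi
            have := congrArg (fun z => Nat.testBit z i) heq
            simp only [Nat.testBit_mod_two_pow, Nat.testBit_div_two_pow,
              Nat.testBit_ofBits_lt _ _ hi] at this
            simpa [hi, add_comm] using this
          · rw [Nat.div_lt_iff_lt_mul (by positivity), Nat.div_lt_iff_lt_mul (by positivity),
              ← pow_add, ← pow_add]
            convert hN'.1 using 2
            rw [hsq]; omega
        · intro N _ N' _ h
          simp only [Prod.mk.injEq] at h
          obtain ⟨h1, h2, h3⟩ := h
          have h4 : N / 2 ^ (m ^ 2) = N' / 2 ^ (m ^ 2) := by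
            rw [← Nat.div_add_mod (N / 2 ^ (m ^ 2)) (2 ^ q), h2, h3, Nat.div_add_mod]
          rw [← Nat.div_add_mod N (2 ^ (m ^ 2)), h1, h4, Nat.div_add_mod]
      rw [hc, hsq]
      generalize (L.filter (· < m)).card = c at *
      have e : 2 ^ (2 * m + 1) = 2 ^ (2 * m + 1 - q) * 2 ^ q := by
        rw [← pow_add]; congr 1; omega
      calc (Wm q L b (m + 1)).card * (2 ^ q) ^ (c + 1)
          ≤ ((Wm q L b m).card * ((2 ^ q - 1) * 2 ^ (2 * m + 1 - q))) * (2 ^ q) ^ (c + 1) :=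
            Nat.mul_le_mul_right _ hcard
        _ = ((Wm q L b m).card * (2 ^ q) ^ c) *
            ((2 ^ q - 1) * (2 ^ (2 * m + 1 - q) * 2 ^ q)) := by
            rw [pow_succ]; ring
        _ ≤ ((2 ^ q - 1) ^ c * 2 ^ (m ^ 2)) *
            ((2 ^ q - 1) * (2 ^ (2 * m + 1 - q) * 2 ^ q)) := Nat.mul_le_mul_right _ ih
        _ = _ := by rw [← e, pow_succ (2 ^ q - 1) c, pow_add 2 (m ^ 2)]; ring
    · have hf : (L.filter (· < m + 1)) = L.filter (· < m) := by
        apply Finset.filter_congr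
        intro j hj
        constructor
        · intro h
          have : j ≠ m := fun h => hm (h ▸ hj)
          omega
        · intro h; omega
      have hcard : (Wm q L b (m + 1)).card ≤ (Wm q L b m).card * 2 ^ (2 * m + 1) := by
        rw [← Finset.card_range (2 ^ (2 * m + 1)), ← Finset.card_product]
        apply Finset.card_le_card_of_injOn (fun N => (N % 2 ^ (m ^ 2), N / 2 ^ (m ^ 2)))
        · intro N hN
          have hN1 := Wm_mod hL (Finset.mem_coe.1 hN)
          have hN' := Finset.mem_coe.1 hN
          simp only [Wm, Finset.mem_filter, Finset.mem_range] at hN'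
          simp only [Finset.coe_product, Set.mem_prod, Finset.mem_coe, Finset.mem_range]
          refine ⟨hN1, ?_⟩
          rw [Nat.div_lt_iff_lt_mul (by positivity), ← pow_add]
          convert hN'.1 using 2
          rw [hsq]; omega
        · intro N _ N' _ h
          simp only [Prod.mk.injEq] at h
          rw [← Nat.div_add_mod N (2 ^ (m ^ 2)), h.1, h.2, Nat.div_add_mod]
      rw [hf, hsq]
      generalize (L.filter (· < m)).card = c at *
      calc (Wm q L b (m + 1)).card * (2 ^ q) ^ c
          ≤ ((Wm q L b m).card * 2 ^ (2 * m + 1)) * (2 ^ q) ^ c := Nat.mul_le_mul_right _ hcard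
        _ = ((Wm q L b m).card * (2 ^ q) ^ c) * 2 ^ (2 * m + 1) := by ring
        _ ≤ ((2 ^ q - 1) ^ c * 2 ^ (m ^ 2)) * 2 ^ (2 * m + 1) := Nat.mul_le_mul_right _ ih
        _ = _ := by rw [pow_add 2 (m ^ 2)]; ring

theorem exists_levels (A : Set ℕ) (hA : A.Infinite) (q : ℕ) :
    ∃ (m : ℕ) (L : Finset ℕ), (∀ j ∈ L, q ≤ j ∧ j < m ∧ ∃ a ∈ A, 2 ^ j ≤ a ∧ Nat.log 2 a = j) ∧
      (2 ^ q - 1) ^ L.card * 2 ^ q ≤ (2 ^ q) ^ L.card := by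
  obtain ⟨M, hM⟩ := exists_M q
  obtain ⟨x, g, hg⟩ := exists_limit A hA
  have hinf : {j | q ≤ j ∧ ∃ a ∈ A, 2 ^ j ≤ a ∧ Nat.log 2 a = j}.Infinite := by
    apply Set.infinite_of_forall_exists_gt
    intro n
    obtain ⟨h1, h2, _⟩ := hg (max q (n + 1))
    have h3 := Nat.le_log_of_pow_le (b := 2) (by norm_num) h2
    have h4 := le_max_left q (n + 1)
    have h5 := le_max_right q (n + 1)
    have h6 : 0 < 2 ^ (max q (n + 1)) := by positivity
    exact ⟨Nat.log 2 (g (max q (n + 1))), ⟨by omega, _, h1,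
      Nat.pow_log_le_self 2 (by omega), rfl⟩, by omega⟩
  obtain ⟨L, hL, hc⟩ := hinf.exists_subset_card_eq M
  refine ⟨L.sup id + 1, L, fun j hj => ?_, by rw [hc]; exact hM⟩
  have h1 := hL hj
  have h2 : j ≤ L.sup id := Finset.le_sup (f := id) hj
  exact ⟨h1.1, by omega, h1.2⟩

/-- The density zero set coded by `x`, relative to `f`. -/
def Dx (f : ℕ → ℕ) (x : ℕ → Bool) : Set ℕ :=
  {N | ∀ i < kk f (Nat.log 2 N), N.testBit i = x (Nat.log 2 N ^ 2 + i)}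

theorem Dx_dens {f : ℕ → ℕ} (hf : ∀ k, k < f k) (x : ℕ → Bool) : Dx f x ∈ densityZero := by
  classical
  apply density_lemma _ (kk f) (kk_tendsto hf)
  intro n
  refine le_trans (Nat.mul_le_mul_right _ (Finset.card_le_card ?_))
    (count_agree n (kk f n) (kk_self_le hf n) (fun i => x (n ^ 2 + i)))
  intro N hN
  rw [Finset.mem_filter] at hN ⊢
  refine ⟨hN.1, ?_⟩
  have h2 := hN.2
  simp only [Dx, mem_ofPred_eq] at h2
  rwa [log_of_mem_lvl hN.1] at h2

theorem C_closed (f : ℕ → ℕ) (A : Set ℕ) (m : ℕ) :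
    IsClosedCantor {x | ∀ N ∈ A, m ≤ N → N ∉ Dx f x} := by
  have : IsClosed {x : ℕ → Bool | ∀ N ∈ A, m ≤ N → N ∉ Dx f x} := by
    simp only [ofPred_forall]
    refine isClosed_iInter fun N => isClosed_iInter fun _ => isClosed_iInter fun _ => ?_
    have e : {x : ℕ → Bool | N ∉ Dx f x} = (⋂ i ∈ Finset.range (kk f (Nat.log 2 N)),
        (fun x : ℕ → Bool => x (Nat.log 2 N ^ 2 + i)) ⁻¹' {N.testBit i})ᶜ := by
      ext x
      simp [Dx, eq_comm]
    rw [e, isClosed_compl_iff]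
    apply isOpen_biInter_finset
    intro i _
    exact (isOpen_discrete _).preimage (continuous_apply _)
  exact this

theorem C_null (f : ℕ → ℕ) (A : Set ℕ) (m : ℕ) (G : ℕ → ℕ)
    (hG : ∀ q, ∃ L : Finset ℕ,
      (∀ j ∈ L, q ≤ j ∧ j < G q ∧ ∃ a ∈ A, 2 ^ j ≤ a ∧ Nat.log 2 a = j) ∧
      (2 ^ q - 1) ^ L.card * 2 ^ q ≤ (2 ^ q) ^ L.card)
    (hfr : ∃ᶠ q in atTop, G q < f q) :
    IsNullCantor {x | ∀ N ∈ A, m ≤ N → N ∉ Dx f x} := by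
  classical
  apply null_of_finite
  intro K
  obtain ⟨q, hq, hqK, hqm⟩ := (hfr.and_eventually
    ((eventually_ge_atTop K).and (eventually_ge_atTop m))).exists
  obtain ⟨L, hL, hM⟩ := hG q
  have ha : ∀ j, ∃ a, j ∈ L → a ∈ A ∧ 2 ^ j ≤ a ∧ Nat.log 2 a = j := by
    intro j
    by_cases hj : j ∈ L
    · obtain ⟨_, _, a, h⟩ := hL j hj
      exact ⟨a, fun _ => h⟩
    · exact ⟨0, fun h => absurd h hj⟩
  choose a ha using ha
  refine ⟨G q ^ 2, Wm q L (fun j i => (a j).testBit i) (G q), ?_, ?_⟩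
  · have h1 := Wm_count q L (fun j hj => (hL j hj).1) (fun j i => (a j).testBit i) (G q)
    rw [Finset.filter_true_of_mem (fun j hj => (hL j hj).2.1)] at h1
    generalize (Wm q L (fun j i => (a j).testBit i) (G q)).card = w at *
    have h2 : w * 2 ^ q ≤ 2 ^ G q ^ 2 := by
      have h3 : 0 < (2 ^ q) ^ L.card := by positivity
      apply Nat.le_of_mul_le_mul_left _ h3
      calc (2 ^ q) ^ L.card * (w * 2 ^ q) = (w * (2 ^ q) ^ L.card) * 2 ^ q := by ring
        _ ≤ ((2 ^ q - 1) ^ L.card * 2 ^ G q ^ 2) * 2 ^ q := Nat.mul_le_mul_right _ h1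
        _ = ((2 ^ q - 1) ^ L.card * 2 ^ q) * 2 ^ G q ^ 2 := by ring
        _ ≤ _ := Nat.mul_le_mul_right _ hM
    exact (Nat.mul_le_mul_left _ (Nat.pow_le_pow_right (by norm_num) hqK)).trans h2
  · intro x hx
    have hb : ∀ i < G q ^ 2, (Nat.ofBits (fun i : Fin (G q ^ 2) => x i)).testBit i = x i := by
      intro i hi
      rw [Nat.testBit_ofBits_lt _ _ hi]
    refine ⟨Nat.ofBits (fun i : Fin (G q ^ 2) => x i), ?_, hb⟩
    simp only [Wm, Finset.mem_filter, Finset.mem_range]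
    refine ⟨Nat.ofBits_lt_two_pow _, fun j hj hjG hall => ?_⟩
    obtain ⟨h1, h2, h3⟩ := ha j hj
    have hqj := (hL j hj).1
    have hj2 : j < 2 ^ j := Nat.lt_two_pow_self
    refine hx (a j) h1 (by omega) ?_
    simp only [Dx, mem_ofPred_eq, h3]
    intro i hi
    have hiq : i < q := lt_of_lt_of_le hi (kk_le (hjG.trans hq))
    rw [← hall i hiq, hb]
    nlinarith

theorem part3 : sInf (covStarFam densityZero) ≤ sInf (nonStarFam densityZero) := by
  classical
  by_contra hlt
  rw [not_le] at hlt
  obtain ⟨𝒜, h1, h2, h3⟩ := csInf_mem nonStar_nonempty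
  rw [← h3] at hlt
  have hG : ∀ A : Set ℕ, ∃ G : ℕ → ℕ, A.Infinite → ∀ q, ∃ L : Finset ℕ,
      (∀ j ∈ L, q ≤ j ∧ j < G q ∧ ∃ a ∈ A, 2 ^ j ≤ a ∧ Nat.log 2 a = j) ∧
      (2 ^ q - 1) ^ L.card * 2 ^ q ≤ (2 ^ q) ^ L.card := by
    intro A
    by_cases hA : A.Infinite
    · choose G hG using exists_levels A hA
      exact ⟨G, fun _ => hG⟩
    · exact ⟨fun _ => 0, fun h => absurd h hA⟩
  choose G hG using hG
  have hnd : ∃ f, ∀ g ∈ G '' 𝒜, ¬ LeStar f g := by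
    by_contra hh
    push Not at hh
    exact absurd ((lemmaD _ hh).trans Cardinal.mk_image_le) (not_le.2 hlt)
  obtain ⟨f0, hf0⟩ := hnd
  let f : ℕ → ℕ := fun k => max (f0 k) (k + 1)
  have hf : ∀ k, k < f k := fun k => lt_of_lt_of_le (Nat.lt_succ_self k) (le_max_right _ _)
  let E : Set ℕ → Set (ℕ → Bool) := fun A => ⋃ m : ℕ, {x | ∀ N ∈ A, m ≤ N → N ∉ Dx f x}
  have hE : ∀ A ∈ 𝒜, E A ∈ EIdeal := by
    intro A hA
    have hfr : ∃ᶠ q in atTop, G A q < f q := by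
      have := hf0 _ ⟨A, hA, rfl⟩
      rw [LeStar, not_eventually] at this
      exact this.mono (fun q hq => lt_of_lt_of_le (not_le.1 hq) (le_max_left _ _))
    exact ⟨_, fun m => ⟨C_closed f A m, C_null f A m (G A) (hG A (h1 A hA)) hfr⟩,
      subset_rfl⟩
  have hnc : ⋃₀ (E '' 𝒜) ≠ Set.univ := by
    intro hu
    have hle : covIdeal EIdeal ≤ Cardinal.mk (E '' 𝒜) := by
      refine csInf_le' ⟨E '' 𝒜, ?_, hu, rfl⟩
      rintro _ ⟨A, hA, rfl⟩
      exact hE A hA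
    exact absurd (part2.trans (hle.trans Cardinal.mk_image_le)) (not_le.2 hlt)
  obtain ⟨x, hx⟩ := (Set.ne_univ_iff_exists_notMem _).1 hnc
  obtain ⟨A, hA, hfin⟩ := h2 _ (Dx_dens hf x)
  apply hx
  refine ⟨E A, ⟨A, hA, rfl⟩, ?_⟩
  obtain ⟨m, hm⟩ := hfin.bddAbove
  refine mem_iUnion.2 ⟨m + 1, fun N hN hmN hD => ?_⟩
  have := hm ⟨hN, hD⟩
  omega

/-- `non(ℰ) ≤ non*(𝒵)`, `cov*(𝒵) ≤ cov(ℰ)` and `cov*(𝒵) ≤ non*(𝒵)`. -/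
theorem stmt19 :
    nonIdeal EIdeal ≤ sInf (nonStarFam densityZero) ∧
    sInf (covStarFam densityZero) ≤ covIdeal EIdeal ∧
    sInf (covStarFam densityZero) ≤ sInf (nonStarFam densityZero) :=
  ⟨part1, part2, part3⟩

end
end
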